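/- Let d ≥ 3, 0 < λ < d − 2, σ > 0, κ ∈ {1, −1}, T > 0, η > 0, and let χ be a smooth, compactly supported probability density on ℝ^d, V^η = χ^η * Φ with χ^η(x) = η^{-d}χ(x/η) and Φ(x) = |x|^{-λ}. Set p* = d/(d−λ). Then there exists a constant C* > 0, depending only on d, λ and σ (in particular independent of η, T, κ), such that: for every classical Schwartz-class solution w of ∂_t w = σΔw − κ div(w ∇V^η * w) on [0,T], if ‖w(0)‖_{L^{p*}(ℝ^d)} ≤ C*, then ‖w(t)‖_{L^{p*}(ℝ^d)} ≤ ‖w(0)‖_{L^{p*}(ℝ^d)} for all t ∈ [0,T]. -/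

import Mathlib

open MeasureTheory Set

noncomputable section

/-- Laplacian of a scalar function on `ℝ^d`. -/
def lapl {d : ℕ} (f : EuclideanSpace ℝ (Fin d) → ℝ) (x : EuclideanSpace ℝ (Fin d)) : ℝ :=
  ∑ i : Fin d, fderiv ℝ (fun y => fderiv ℝ f y (EuclideanSpace.single i 1)) x
    (EuclideanSpace.single i 1)

/-- Divergence of a vector field on `ℝ^d`. -/
def diverg {d : ℕ} (F : EuclideanSpace ℝ (Fin d) → EuclideanSpace ℝ (Fin d))
    (x : EuclideanSpace ℝ (Fin d)) : ℝ :=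
  ∑ i : Fin d, fderiv ℝ (fun y => F y i) x (EuclideanSpace.single i 1)

/-- The mollified Riesz potential `V^η = χ^η * Φ` with `χ^η(x) = η^{-d} χ(x/η)` and
`Φ(x) = |x|^{-λ}`. -/
def Veta {d : ℕ} (lam : ℝ) (χ : EuclideanSpace ℝ (Fin d) → ℝ) (η : ℝ)
    (z : EuclideanSpace ℝ (Fin d)) : ℝ :=
  ∫ y, (η ^ (-(d : ℝ)) * χ (η⁻¹ • (z - y))) * ‖y‖ ^ (-lam)

/-- A classical Schwartz-class solution of `∂_t w = σΔw − κ div(w (K * w))` on `[0,T]`,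
where `(K * w)(x) = ∫ K(x−y) w(y) dy` for a vector-valued interaction kernel `K`
(in the application, `K = ∇V^η` or `K = ∇Φ`): `(t,x) ↦ w(t,x)` is smooth,
`w(t,·)` is a Schwartz function for every `t ∈ [0,T]`, `w ≥ 0`, `∫ w(t,x) dx = 1`,
and the equation holds pointwise. -/
def IsAggregationSolution {d : ℕ} (σ κ T : ℝ)
    (K : EuclideanSpace ℝ (Fin d) → EuclideanSpace ℝ (Fin d))
    (w : ℝ → EuclideanSpace ℝ (Fin d) → ℝ) : Prop :=
  ContDiffOn ℝ (⊤ : ℕ∞) (fun p : ℝ × EuclideanSpace ℝ (Fin d) => w p.1 p.2) (Icc 0 T ×ˢ univ) ∧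
  (∀ t ∈ Icc (0:ℝ) T, ∃ S : SchwartzMap (EuclideanSpace ℝ (Fin d)) ℝ, ∀ x, w t x = S x) ∧
  (∀ t ∈ Icc (0:ℝ) T, ∀ x, 0 ≤ w t x) ∧
  (∀ t ∈ Icc (0:ℝ) T, (∫ x, w t x) = 1) ∧
  (∀ t ∈ Icc (0:ℝ) T, ∀ x, HasDerivWithinAt (fun s => w s x)
    (σ * lapl (w t) x - κ * diverg (fun z => w t z • ∫ y, w t y • K (z - y)) x)
    (Icc 0 T) t)

/-!
Testing the equation with `p* w ^ (p* - 1)` produces the dissipation `σ ∫ |∇ w ^ (p* / 2)|²`, up to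
a constant, against a multiple of `∫ w ^ p* |div b|`, where `b = ∇V^η * w`. Since
`div b = w * ΔV^η` and `|ΔV^η| ≤ λ (d + λ + 2) χ^η * |·| ^ (-λ - 2)`, the Hardy–Littlewood–Sobolev
and Sobolev inequalities bound `∫ v² |div b|` by `C ‖w‖_{p*} ∫ |∇v|²`, with `C` independent of `η`.
With `v = w ^ (p* / 2)` the dissipation wins as long as `‖w(t)‖_{p*}` is small, so `∫ w ^ p*` cannot
increase. A crude Grönwall estimate, whose rate may depend on `η`, prevents `∫ w ^ p*` from doubling
on a short time step, and the smallness therefore propagates over all of `[0, T]`.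

The power `w ^ p*` is neither `C²` in `w` nor compatible with integration by parts over the whole
space, hence it is replaced by `w θ(w)` with a bounded smooth approximation `θ` of
`y ↦ y ^ (p* - 1)`, and the integrals are localised by cutoffs.
-/

open Metric Module Filter Topology
open scoped NNReal ENNReal Pointwise ContDiff Convolution

section HardyLittlewoodSobolev

theorem ofReal_norm_rpow {E : Type*} [NormedAddCommGroup E] {z : E} (hz : z ≠ 0) (b : ℝ) :
    ENNReal.ofReal (‖z‖ ^ b) = ‖z‖ₑ ^ b := by
  rw [← ENNReal.ofReal_rpow_of_pos (norm_pos_iff.2 hz), ofReal_norm]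

theorem lintegral_lintegral_le_add_of_union_eq_univ {α : Type*} [MeasurableSpace α]
    {μ : Measure α} [SFinite μ] {k : α × α → ℝ≥0∞}
    (hk : Measurable k) {A B : Set (α × α)} (hA : MeasurableSet A) (hB : MeasurableSet B)
    (hAB : A ∪ B = univ) :
    ∫⁻ x, ∫⁻ y, k (x, y) ∂μ ∂μ ≤ ∫⁻ x, ∫⁻ y in {y | (x, y) ∈ A}, k (x, y) ∂μ ∂μ +
      ∫⁻ y, ∫⁻ x in {x | (x, y) ∈ B}, k (x, y) ∂μ ∂μ := by
  calc ∫⁻ x, ∫⁻ y, k (x, y) ∂μ ∂μ = ∫⁻ p in A ∪ B, k p ∂μ.prod μ := by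
        rw [hAB, setLIntegral_univ, lintegral_prod _ hk.aemeasurable]
    _ ≤ ∫⁻ p in A, k p ∂μ.prod μ + ∫⁻ p in B, k p ∂μ.prod μ := lintegral_union_le _ _ _
    _ = _ := by
        rw [← lintegral_indicator hA, ← lintegral_indicator hB,
          lintegral_prod _ (hk.indicator hA).aemeasurable,
          lintegral_prod_symm _ (hk.indicator hB).aemeasurable]
        congr 1
        · exact lintegral_congr fun x =>
            lintegral_indicator (measurable_prodMk_left hA) fun y => k (x, y)
        · exact lintegral_congr fun y =>
            lintegral_indicator (measurable_prodMk_right hB) fun x => k (x, y)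

theorem lintegral_coe_div_rpow_eq_one {α : Type*} [MeasurableSpace α] {μ : Measure α}
    {r : ℝ} (hr : 0 < r) {f : α → ℝ≥0} {A : ℝ≥0} (hA : A ≠ 0)
    (hfA : A = (∫⁻ x, (f x : ℝ≥0∞) ^ r ∂μ) ^ (1 / r)) :
    ∫⁻ x, ((f x / A : ℝ≥0) : ℝ≥0∞) ^ r ∂μ = 1 := by
  have hA' : (A : ℝ≥0∞) ^ r = ∫⁻ x, (f x : ℝ≥0∞) ^ r ∂μ := by
    rw [hfA, ← ENNReal.rpow_mul, one_div_mul_cancel hr.ne', ENNReal.rpow_one]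
  have hA0 : (A : ℝ≥0∞) ^ r ≠ 0 := by simp [hA]
  have hAt : (A : ℝ≥0∞) ^ r ≠ ⊤ := by finiteness
  simp_rw [ENNReal.coe_div hA, ENNReal.div_rpow_of_nonneg _ _ hr.le, div_eq_mul_inv]
  rw [lintegral_mul_const' _ _ (ENNReal.inv_ne_top.2 hA0), ← hA', ENNReal.mul_inv_cancel hA0 hAt]

theorem lintegral_lintegral_mul_le_of_forall_normalized {α : Type*} [MeasurableSpace α]
    {μ : Measure α} {r s : ℝ} (hr : 0 < r) (hs : 0 < s) {k : α → α → ℝ≥0∞} {C : ℝ≥0∞}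
    (hC : ∀ f g : α → ℝ≥0, Measurable f → Measurable g →
      ∫⁻ x, (f x : ℝ≥0∞) ^ r ∂μ ≤ 1 → ∫⁻ y, (g y : ℝ≥0∞) ^ s ∂μ ≤ 1 →
      ∫⁻ x, ∫⁻ y, f x * g y * k x y ∂μ ∂μ ≤ C)
    {f g : α → ℝ≥0} (hf : Measurable f) (hg : Measurable g) {A B : ℝ≥0} (hA0 : A ≠ 0)
    (hB0 : B ≠ 0) (hA : A = (∫⁻ x, (f x : ℝ≥0∞) ^ r ∂μ) ^ (1 / r))
    (hB : B = (∫⁻ y, (g y : ℝ≥0∞) ^ s ∂μ) ^ (1 / s)) :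
    ∫⁻ x, ∫⁻ y, f x * g y * k x y ∂μ ∂μ ≤ C * A * B := by
  have hscale (x y : α) : f x * g y * k x y =
      (A * B : ℝ≥0) * ((f x / A : ℝ≥0) * (g y / B : ℝ≥0) * k x y) := by
    rw [← mul_assoc, ← ENNReal.coe_mul, ← ENNReal.coe_mul, ← ENNReal.coe_mul]
    congr 2
    field_simp
  simp_rw [hscale, lintegral_const_mul' _ _ ENNReal.coe_ne_top]
  rw [mul_assoc, mul_comm C, ← ENNReal.coe_mul]
  gcongr
  exact hC _ _ (by fun_prop) (by fun_prop) (lintegral_coe_div_rpow_eq_one hr hA0 hA).le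
    (lintegral_coe_div_rpow_eq_one hs hB0 hB).le

variable {E : Type*} [NormedAddCommGroup E] [MeasurableSpace E] {μ : Measure E}

theorem lintegral_setLIntegral_le_rpow_le {a r s n : ℝ} {C : ℝ≥0∞} (hr : 0 < r) (hs : 0 < s)
    (hrel : 1 / r + 1 / s + a / n = 2) {f g : E → ℝ≥0}
    (hC : ∀ β : ℝ≥0, β ≠ 0 → ∀ x, ∫⁻ y in {y | g y ≤ β}, g y * ‖x - y‖ₑ ^ (-a) ∂μ ≤
      C * (β : ℝ≥0∞) ^ (1 - s + s * a / n)) (hf : Measurable f)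
    (hfr : ∫⁻ x, (f x : ℝ≥0∞) ^ r ∂μ ≤ 1) :
    ∫⁻ x, ∫⁻ y in {y | g y ≤ f x ^ (r / s)}, f x * g y * ‖x - y‖ₑ ^ (-a) ∂μ ∂μ ≤ C := by
  have hexp : r / s * (1 - s + s * a / n) = r - 1 := by
    have : a / n = 2 - 1 / r - 1 / s := by linarith
    rw [mul_div_assoc, this]
    field_simp
    ring
  calc ∫⁻ x, ∫⁻ y in {y | g y ≤ f x ^ (r / s)}, f x * g y * ‖x - y‖ₑ ^ (-a) ∂μ ∂μ
      ≤ ∫⁻ x, C * (f x : ℝ≥0∞) ^ r ∂μ := by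
        refine lintegral_mono fun x => ?_
        simp_rw [mul_assoc]
        rw [lintegral_const_mul' _ _ ENNReal.coe_ne_top]
        rcases eq_or_ne (f x) 0 with hx | hx
        · simp [hx]
        have hx' : (f x : ℝ≥0∞) ≠ 0 := by simpa using hx
        calc _ ≤ f x * (C * ((f x ^ (r / s) : ℝ≥0) : ℝ≥0∞) ^ (1 - s + s * a / n)) := by
              gcongr
              exact hC _ (by simp [hx]) x
          _ = C * (f x : ℝ≥0∞) ^ r := by
              rw [ENNReal.coe_rpow_of_ne_zero hx, ← ENNReal.rpow_mul, hexp, mul_left_comm,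
                ENNReal.rpow_sub _ _ hx' ENNReal.coe_ne_top, ENNReal.rpow_one,
                ENNReal.mul_div_cancel hx' ENNReal.coe_ne_top]
    _ = C * ∫⁻ x, (f x : ℝ≥0∞) ^ r ∂μ := lintegral_const_mul _ (by fun_prop)
    _ ≤ C := mul_le_of_le_one_right' hfr

variable [NormedSpace ℝ E] [FiniteDimensional ℝ E] [BorelSpace E] [μ.IsAddHaarMeasure]

theorem setLIntegral_smul_enorm_rpow {ρ : ℝ} (hρ : 0 < ρ) {s : Set E} (hs : MeasurableSet s)
    (b : ℝ) :
    ∫⁻ z in ρ • s, ‖z‖ₑ ^ b ∂μ =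
      ENNReal.ofReal ρ ^ (finrank ℝ E + b) * ∫⁻ z in s, ‖z‖ₑ ^ b ∂μ := by
  have hρ' : ENNReal.ofReal ρ ≠ 0 := by simpa using hρ
  have hμ : μ = ENNReal.ofReal ρ ^ (finrank ℝ E : ℝ) • μ.map (ρ • ·) := by
    rw [Measure.map_addHaar_smul μ hρ.ne', smul_smul, abs_inv, abs_of_pos (by positivity),
      ENNReal.ofReal_inv_of_pos (by positivity), ENNReal.ofReal_pow hρ.le, ENNReal.rpow_natCast,
      ENNReal.mul_inv_cancel (by simp [hρ]) (by finiteness), one_smul]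
  have hpre : (ρ • · : E → E) ⁻¹' (ρ • s) = s := by
    rw [preimage_smul₀ hρ.ne', inv_smul_smul₀ hρ.ne']
  conv_lhs => rw [hμ]
  rw [Measure.restrict_smul, lintegral_smul_measure, smul_eq_mul,
    setLIntegral_map (hs.const_smul₀ ρ) (by fun_prop) (by fun_prop), hpre,
    ENNReal.rpow_add _ _ hρ' ENNReal.ofReal_ne_top, mul_assoc,
    ← lintegral_const_mul (ENNReal.ofReal ρ ^ b) (by fun_prop)]
  simp_rw [enorm_smul, Real.enorm_of_nonneg hρ.le,
    ENNReal.mul_rpow_of_ne_top ENNReal.ofReal_ne_top enorm_ne_top]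

theorem lintegral_unitBall_enorm_rpow_ne_top {b : ℝ} (hb0 : 0 < b) (hb : b < finrank ℝ E) :
    ∫⁻ z in ball (0 : E) 1, ‖z‖ₑ ^ (-b) ∂μ ≠ ⊤ := by
  have hdim : 0 < finrank ℝ E := by exact_mod_cast hb0.trans hb
  have : Nontrivial E := nontrivial_of_finrank_pos hdim
  have hint : IntegrableOn (fun z : E => ‖z‖ ^ (-b)) (ball 0 1) μ :=
    integrableOn_ball_of_norm_le_rpow (C := 1) hdim hb
      (Eventually.of_forall fun z => by
        rw [Real.norm_of_nonneg (by positivity), one_mul])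
      (measurable_norm.pow_const (-b)).aestronglyMeasurable
  refine ne_of_eq_of_ne (lintegral_congr_ae ?_) hint.hasFiniteIntegral.ne
  filter_upwards [ae_restrict_of_ae (Measure.ae_ne μ 0)] with z hz
  rw [Real.enorm_of_nonneg (by positivity), ofReal_norm_rpow hz]

theorem lintegral_unitBall_compl_enorm_rpow_ne_top {b : ℝ} (hb : finrank ℝ E < b) :
    ∫⁻ z in (ball (0 : E) 1)ᶜ, ‖z‖ₑ ^ (-b) ∂μ ≠ ⊤ := by
  have hb0 : 0 < b := (Nat.cast_nonneg _).trans_lt hb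
  have hint := (integrable_one_add_norm (μ := μ) hb).const_mul (2 ^ b)
  refine ne_top_of_le_ne_top hint.hasFiniteIntegral.ne
    ((setLIntegral_mono' measurableSet_ball.compl fun z hz => ?_).trans
      (setLIntegral_le_lintegral _ _))
  have hz1 : 1 ≤ ‖z‖ := by simpa using hz
  have hcompare : ‖z‖ ^ (-b) ≤ 2 ^ b * (1 + ‖z‖) ^ (-b) := by
    rw [Real.rpow_neg (by positivity), Real.rpow_neg (by positivity), ← div_eq_mul_inv,
      ← Real.div_rpow (by positivity) (by positivity), ← Real.inv_rpow (by positivity)]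
    refine Real.rpow_le_rpow (by positivity) ?_ hb0.le
    rw [inv_eq_one_div, div_le_div_iff₀ (by positivity) (by positivity)]
    linarith
  rw [← ofReal_norm_rpow (norm_pos_iff.1 (by positivity)), Real.enorm_of_nonneg (by positivity)]
  exact ENNReal.ofReal_le_ofReal hcompare

theorem setLIntegral_le_mul_enorm_rpow_le_near_add_far {s s' : ℝ} (hs : s.HolderConjugate s')
    {g : E → ℝ≥0} (hg : Measurable g) (β : ℝ≥0) (a ρ : ℝ) (x : E) :
    ∫⁻ y in {y | g y ≤ β}, g y * ‖x - y‖ₑ ^ (-a) ∂μ ≤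
      β * ∫⁻ z in ball 0 ρ, ‖z‖ₑ ^ (-a) ∂μ +
        (∫⁻ y, (g y : ℝ≥0∞) ^ s ∂μ) ^ (1 / s) *
          (∫⁻ z in (ball 0 ρ)ᶜ, ‖z‖ₑ ^ (-(a * s')) ∂μ) ^ (1 / s') := by
  set near : E → ℝ≥0∞ := (ball 0 ρ).indicator fun z => ‖z‖ₑ ^ (-a)
  set far : E → ℝ≥0∞ := (ball 0 ρ)ᶜ.indicator fun z => ‖z‖ₑ ^ (-a)
  have hnear : Measurable near := Measurable.indicator (by fun_prop) measurableSet_ball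
  have hfar : Measurable far := Measurable.indicator (by fun_prop) measurableSet_ball.compl
  have hsplit (z : E) : ‖z‖ₑ ^ (-a) = near z + far z :=
    (indicator_self_add_compl_apply (ball 0 ρ) (fun z : E => ‖z‖ₑ ^ (-a)) z).symm
  have hfar_pow (z : E) :
      far z ^ s' = (ball 0 ρ)ᶜ.indicator (fun z => ‖z‖ₑ ^ (-(a * s'))) z := by
    by_cases hz : z ∈ (ball (0 : E) ρ)ᶜ
    · simp only [far, indicator_of_mem hz, ← ENNReal.rpow_mul, neg_mul]
    · simp only [far, indicator_of_notMem hz, ENNReal.zero_rpow_of_pos hs.symm.pos]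
  calc ∫⁻ y in {y | g y ≤ β}, g y * ‖x - y‖ₑ ^ (-a) ∂μ
      ≤ ∫⁻ y in {y | g y ≤ β}, (β * near (x - y) + g y * far (x - y)) ∂μ := by
        refine setLIntegral_mono' (measurableSet_le hg measurable_const) fun y hy => ?_
        rw [hsplit, mul_add]
        gcongr
        exact hy
    _ ≤ ∫⁻ y, (β * near (x - y) + g y * far (x - y)) ∂μ := setLIntegral_le_lintegral _ _
    _ = β * ∫⁻ y, near (x - y) ∂μ + ∫⁻ y, g y * far (x - y) ∂μ := by
        rw [lintegral_add_left (by fun_prop), lintegral_const_mul _ (by fun_prop)]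
    _ ≤ β * ∫⁻ y, near (x - y) ∂μ + (∫⁻ y, (g y : ℝ≥0∞) ^ s ∂μ) ^ (1 / s) *
          (∫⁻ y, far (x - y) ^ s' ∂μ) ^ (1 / s') := by
        gcongr
        exact ENNReal.lintegral_mul_le_Lp_mul_Lq μ hs (by fun_prop) (by fun_prop)
    _ = _ := by
        rw [lintegral_sub_left_eq_self near x, lintegral_sub_left_eq_self (fun z => far z ^ s') x,
          lintegral_congr hfar_pow, lintegral_indicator measurableSet_ball,
          lintegral_indicator measurableSet_ball.compl]

theorem compl_ball_zero_eq_smul_compl_unitBall {F : Type*} [NormedAddCommGroup F]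
    [NormedSpace ℝ F] {ρ : ℝ} (hρ : 0 < ρ) : (ball (0 : F) ρ)ᶜ = ρ • (ball 0 1)ᶜ := by
  rw [← smul_unitBall_of_pos hρ, compl_eq_univ_sdiff, compl_eq_univ_sdiff,
    smul_set_sdiff₀ hρ.ne', smul_set_univ₀ hρ.ne']

-- At the radius `ρ = β ^ (-s / n)` the near and far contributions scale alike in `β`.
theorem exists_setLIntegral_le_mul_enorm_rpow_le {a s s' : ℝ} (ha0 : 0 < a)
    (had : a < finrank ℝ E) (hs : s.HolderConjugate s') (has : finrank ℝ E < a * s') :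
    ∃ C : ℝ≥0∞, C ≠ ⊤ ∧ ∀ g : E → ℝ≥0, Measurable g → ∫⁻ y, (g y : ℝ≥0∞) ^ s ∂μ ≤ 1 →
      ∀ β : ℝ≥0, β ≠ 0 → ∀ x, ∫⁻ y in {y | g y ≤ β}, g y * ‖x - y‖ₑ ^ (-a) ∂μ ≤
        C * (β : ℝ≥0∞) ^ (1 - s + s * a / finrank ℝ E) := by
  set n : ℝ := ((finrank ℝ E : ℕ) : ℝ)
  have hn : 0 < n := ha0.trans had
  have hs' := hs.symm.pos
  set N := ∫⁻ z in ball (0 : E) 1, ‖z‖ₑ ^ (-a) ∂μ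
  set N' := ∫⁻ z in (ball (0 : E) 1)ᶜ, ‖z‖ₑ ^ (-(a * s')) ∂μ
  have hN : N ≠ ⊤ := lintegral_unitBall_enorm_rpow_ne_top ha0 had
  have hN' : N' ≠ ⊤ := lintegral_unitBall_compl_enorm_rpow_ne_top has
  refine ⟨N + N' ^ (1 / s'), by finiteness, fun g hg hgs β hβ x => ?_⟩
  have hβ' : (β : ℝ≥0∞) ≠ 0 := by simpa using hβ
  have hβ0 : 0 < (β : ℝ) := by positivity
  set ρ : ℝ := (β : ℝ) ^ (-s / n)
  have hρ : 0 < ρ := by positivity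
  have hρβ : ENNReal.ofReal ρ = (β : ℝ≥0∞) ^ (-s / n) := by
    rw [← ENNReal.ofReal_rpow_of_pos hβ0, ENNReal.ofReal_coe_nnreal]
  have hnear : -s / n * (n + -a) = -s + s * a / n := by field_simp; ring
  have hfar : -s / n * (n + -(a * s')) * (1 / s') = 1 - s + s * a / n := by
    have := hs.mul_eq_add
    field_simp
    linear_combination n * this
  calc ∫⁻ y in {y | g y ≤ β}, g y * ‖x - y‖ₑ ^ (-a) ∂μ
      ≤ β * ∫⁻ z in ball 0 ρ, ‖z‖ₑ ^ (-a) ∂μ +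
        1 ^ (1 / s) * (∫⁻ z in (ball 0 ρ)ᶜ, ‖z‖ₑ ^ (-(a * s')) ∂μ) ^ (1 / s') :=
        (setLIntegral_le_mul_enorm_rpow_le_near_add_far hs hg β a ρ x).trans
          (by have := hs.pos; gcongr)
    _ = (β * (β : ℝ≥0∞) ^ (-s + s * a / n)) * N +
          (β : ℝ≥0∞) ^ (1 - s + s * a / n) * N' ^ (1 / s') := by
        rw [compl_ball_zero_eq_smul_compl_unitBall hρ, ← smul_unitBall_of_pos hρ,
          setLIntegral_smul_enorm_rpow hρ measurableSet_ball,
          setLIntegral_smul_enorm_rpow hρ measurableSet_ball.compl, hρβ, ← ENNReal.rpow_mul,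
          ← ENNReal.rpow_mul, hnear, ENNReal.mul_rpow_of_nonneg _ _ (by positivity),
          ← ENNReal.rpow_mul, hfar, ENNReal.one_rpow, one_mul, mul_assoc]
    _ = _ := by
        have hpow : β * (β : ℝ≥0∞) ^ (-s + s * a / n) = (β : ℝ≥0∞) ^ (1 - s + s * a / n) := by
          rw [sub_add_eq_add_sub, add_sub_assoc, neg_add_eq_sub,
            ENNReal.rpow_add _ _ hβ' ENNReal.coe_ne_top, ENNReal.rpow_one]
        rw [hpow]
        ring

theorem lt_mul_of_one_div_add_one_div_add_div_eq_two {a r s s' n : ℝ} (hr : 1 < r)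
    (hs : s.HolderConjugate s') (hn : 0 < n) (hrel : 1 / r + 1 / s + a / n = 2) : n < a * s' := by
  have hr1 : 1 / r < 1 := (div_lt_one (by linarith)).2 hr
  have hinv : 1 / s' < a / n := by
    have := hs.inv_add_inv_eq_one
    rw [← one_div, ← one_div] at this
    linarith
  rwa [div_lt_div_iff₀ hs.symm.pos hn, one_mul] at hinv

-- The product set splits along `g y ≤ f x ^ (r / s)`; off it, `f x ≤ g y ^ (s / r)`.
theorem exists_lintegral_mul_mul_enorm_rpow_le_of_lintegral_rpow_le_one {a r s : ℝ} (hr : 1 < r)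
    (hs : 1 < s) (ha0 : 0 < a) (had : a < finrank ℝ E)
    (hrel : 1 / r + 1 / s + a / finrank ℝ E = 2) :
    ∃ C : ℝ≥0∞, C ≠ ⊤ ∧ ∀ f g : E → ℝ≥0, Measurable f → Measurable g →
      ∫⁻ x, (f x : ℝ≥0∞) ^ r ∂μ ≤ 1 → ∫⁻ y, (g y : ℝ≥0∞) ^ s ∂μ ≤ 1 →
      ∫⁻ x, ∫⁻ y, f x * g y * ‖x - y‖ₑ ^ (-a) ∂μ ∂μ ≤ C := by
  have hn : 0 < (finrank ℝ E : ℝ) := ha0.trans had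
  have hr0 : 0 < r := by linarith
  have hs0 : 0 < s := by linarith
  have hrel' : 1 / s + 1 / r + a / finrank ℝ E = 2 := by linarith
  have hr_conj := Real.HolderConjugate.conjExponent hr
  have hs_conj := Real.HolderConjugate.conjExponent hs
  obtain ⟨C₁, hC₁, hg_le⟩ := exists_setLIntegral_le_mul_enorm_rpow_le (μ := μ) ha0 had hs_conj
    (lt_mul_of_one_div_add_one_div_add_div_eq_two hr hs_conj hn hrel)
  obtain ⟨C₂, hC₂, hf_le⟩ := exists_setLIntegral_le_mul_enorm_rpow_le (μ := μ) ha0 had hr_conj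
    (lt_mul_of_one_div_add_one_div_add_div_eq_two hs hr_conj hn hrel')
  refine ⟨C₁ + C₂, by finiteness, fun f g hf hg hfr hgs => ?_⟩
  have hcover : {p : E × E | g p.2 ≤ f p.1 ^ (r / s)} ∪ {p | f p.1 ≤ g p.2 ^ (s / r)} = univ := by
    refine eq_univ_of_forall fun p => or_iff_not_imp_left.2 fun hp => ?_
    have := NNReal.rpow_le_rpow (not_le.1 hp).le (show 0 ≤ s / r by positivity)
    rwa [← NNReal.rpow_mul, div_mul_div_cancel₀ hs0.ne', div_self hr0.ne',
      NNReal.rpow_one] at this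
  refine (lintegral_lintegral_le_add_of_union_eq_univ
    (k := fun p => f p.1 * g p.2 * ‖p.1 - p.2‖ₑ ^ (-a)) (by fun_prop)
    (measurableSet_le (by fun_prop) (by fun_prop))
    (measurableSet_le (by fun_prop) (by fun_prop)) hcover).trans (add_le_add ?_ ?_)
  · exact lintegral_setLIntegral_le_rpow_le hr0 hs0 hrel (hg_le g hg hgs) hf hfr
  · simp only [mul_comm (f _ : ℝ≥0∞), fun x y : E => enorm_sub_rev x y]
    exact lintegral_setLIntegral_le_rpow_le hs0 hr0 hrel' (hf_le f hf hfr) hg hgs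

theorem hardyLittlewoodSobolev {a r s : ℝ} (hr : 1 < r) (hs : 1 < s) (ha0 : 0 < a)
    (had : a < finrank ℝ E) (hrel : 1 / r + 1 / s + a / finrank ℝ E = 2) :
    ∃ C : ℝ≥0∞, C ≠ ⊤ ∧ ∀ f g : E → ℝ≥0, Measurable f → Measurable g →
      ∫⁻ x, ∫⁻ y, f x * g y * ‖x - y‖ₑ ^ (-a) ∂μ ∂μ ≤
        C * (∫⁻ x, (f x : ℝ≥0∞) ^ r ∂μ) ^ (1 / r) * (∫⁻ y, (g y : ℝ≥0∞) ^ s ∂μ) ^ (1 / s) := by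
  obtain ⟨C, hC, hle⟩ := exists_lintegral_mul_mul_enorm_rpow_le_of_lintegral_rpow_le_one
    (μ := μ) hr hs ha0 had hrel
  have hr0 : 0 < r := by linarith
  have hs0 : 0 < s := by linarith
  refine ⟨C + 1, by finiteness, fun f g hf hg => ?_⟩
  rcases eq_or_ne ((∫⁻ x, (f x : ℝ≥0∞) ^ r ∂μ) ^ (1 / r)) 0 with hA0 | hA0
  · have hvanish_f := ENNReal.ae_eq_zero_of_lintegral_rpow_eq_zero hr0.le
      (f := fun x => (f x : ℝ≥0∞)) (by fun_prop)
      ((ENNReal.rpow_eq_zero_iff_of_pos (by positivity)).1 hA0)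
    refine le_of_eq_of_le (lintegral_eq_zero_of_ae_eq_zero ?_) zero_le
    filter_upwards [hvanish_f] with x hx
    simp [hx]
  rcases eq_or_ne ((∫⁻ y, (g y : ℝ≥0∞) ^ s ∂μ) ^ (1 / s)) 0 with hB0 | hB0
  · have hvanish_g := ENNReal.ae_eq_zero_of_lintegral_rpow_eq_zero hs0.le
      (f := fun y => (g y : ℝ≥0∞)) (by fun_prop)
      ((ENNReal.rpow_eq_zero_iff_of_pos (by positivity)).1 hB0)
    refine le_of_eq_of_le
      (lintegral_eq_zero_of_ae_eq_zero (Eventually.of_forall fun x => ?_)) zero_le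
    refine lintegral_eq_zero_of_ae_eq_zero ?_
    filter_upwards [hvanish_g] with y hy
    simp [hy]
  rcases eq_or_ne ((∫⁻ x, (f x : ℝ≥0∞) ^ r ∂μ) ^ (1 / r)) ⊤ with hAt | hAt
  · rw [hAt, ENNReal.mul_top (by positivity), ENNReal.top_mul hB0]
    exact le_top
  rcases eq_or_ne ((∫⁻ y, (g y : ℝ≥0∞) ^ s ∂μ) ^ (1 / s)) ⊤ with hBt | hBt
  · rw [hBt, ENNReal.mul_top (by positivity)]
    exact le_top
  lift (∫⁻ x, (f x : ℝ≥0∞) ^ r ∂μ) ^ (1 / r) to ℝ≥0 using hAt with A hA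
  lift (∫⁻ y, (g y : ℝ≥0∞) ^ s ∂μ) ^ (1 / s) to ℝ≥0 using hBt with B hB
  rw [ENNReal.coe_ne_zero] at hA0 hB0
  exact (lintegral_lintegral_mul_le_of_forall_normalized hr0 hs0 hle hf hg hA0 hB0 hA hB).trans
    (by gcongr; exact le_self_add)

theorem lintegral_mul_lintegral_mul_lintegral_sub_sub {f g ρ k : E → ℝ≥0∞} (hf : Measurable f)
    (hg : Measurable g) (hρ : Measurable ρ) (hk : Measurable k) :
    ∫⁻ x, f x * ∫⁻ y, g y * ∫⁻ z, ρ z * k (x - y - z) ∂μ ∂μ ∂μ =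
      ∫⁻ z, ρ z * ∫⁻ x, ∫⁻ y, f x * g (y - z) * k (x - y) ∂μ ∂μ ∂μ := by
  have hinner (x : E) : ∫⁻ y, g y * ∫⁻ z, ρ z * k (x - y - z) ∂μ ∂μ =
      ∫⁻ z, ρ z * ∫⁻ y, g (y - z) * k (x - y) ∂μ ∂μ := by
    calc ∫⁻ y, g y * ∫⁻ z, ρ z * k (x - y - z) ∂μ ∂μ
        = ∫⁻ y, ∫⁻ z, g y * (ρ z * k (x - y - z)) ∂μ ∂μ :=
          lintegral_congr fun y => (lintegral_const_mul _ (by fun_prop)).symm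
      _ = ∫⁻ z, ∫⁻ y, g y * (ρ z * k (x - y - z)) ∂μ ∂μ := lintegral_lintegral_swap (by fun_prop)
      _ = ∫⁻ z, ρ z * ∫⁻ y, g (y - z) * k (x - y) ∂μ ∂μ := by
          refine lintegral_congr fun z => ?_
          rw [← lintegral_const_mul _ (by fun_prop), ← lintegral_sub_right_eq_self _ z]
          refine lintegral_congr fun y => ?_
          rw [sub_sub, sub_add_cancel, mul_left_comm]
  calc ∫⁻ x, f x * ∫⁻ y, g y * ∫⁻ z, ρ z * k (x - y - z) ∂μ ∂μ ∂μ
      = ∫⁻ x, ∫⁻ z, f x * (ρ z * ∫⁻ y, g (y - z) * k (x - y) ∂μ) ∂μ ∂μ :=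
        lintegral_congr fun x => by rw [hinner, lintegral_const_mul _ (by fun_prop)]
    _ = ∫⁻ z, ∫⁻ x, f x * (ρ z * ∫⁻ y, g (y - z) * k (x - y) ∂μ) ∂μ ∂μ :=
        lintegral_lintegral_swap (Measurable.aemeasurable (by fun_prop))
    _ = ∫⁻ z, ρ z * ∫⁻ x, ∫⁻ y, f x * g (y - z) * k (x - y) ∂μ ∂μ ∂μ := by
        refine lintegral_congr fun z => ?_
        rw [← lintegral_const_mul _ (by fun_prop)]
        refine lintegral_congr fun x => ?_
        simp_rw [mul_assoc]
        rw [lintegral_const_mul _ (by fun_prop), mul_left_comm]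

theorem hardyLittlewoodSobolev_mollified {a r s : ℝ} (hr : 1 < r) (hs : 1 < s) (ha0 : 0 < a)
    (had : a < finrank ℝ E) (hrel : 1 / r + 1 / s + a / finrank ℝ E = 2) :
    ∃ C : ℝ≥0∞, C ≠ ⊤ ∧ ∀ (f g : E → ℝ≥0) (ρ : E → ℝ≥0∞), Measurable f → Measurable g →
      Measurable ρ → ∫⁻ x, f x * ∫⁻ y, g y * ∫⁻ z, ρ z * ‖x - y - z‖ₑ ^ (-a) ∂μ ∂μ ∂μ ≤
        (∫⁻ z, ρ z ∂μ) * (C * (∫⁻ x, (f x : ℝ≥0∞) ^ r ∂μ) ^ (1 / r) *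
          (∫⁻ y, (g y : ℝ≥0∞) ^ s ∂μ) ^ (1 / s)) := by
  obtain ⟨C, hC, hle⟩ := hardyLittlewoodSobolev (μ := μ) hr hs ha0 had hrel
  refine ⟨C, hC, fun f g ρ hf hg hρ => ?_⟩
  rw [lintegral_mul_lintegral_mul_lintegral_sub_sub (f := fun x => (f x : ℝ≥0∞))
    (g := fun y => (g y : ℝ≥0∞)) (k := fun z => ‖z‖ₑ ^ (-a)) (by fun_prop) (by fun_prop) hρ
    (by fun_prop), ← lintegral_mul_const _ hρ]
  gcongr with z
  refine (hle f (fun y => g (y - z)) hf (by fun_prop)).trans (le_of_eq ?_)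
  rw [lintegral_sub_right_eq_self (fun y => (g y : ℝ≥0∞) ^ s) z]

end HardyLittlewoodSobolev

local notation:max "ℝ^" n:max => EuclideanSpace ℝ (Fin n)

section VectorCalculus

variable {d : ℕ} {n m : WithTop ℕ∞} {f g : ℝ^d → ℝ} {F G : ℝ^d → ℝ^d} {x : ℝ^d}

theorem gradient_apply (f : ℝ^d → ℝ) (x : ℝ^d) (i : Fin d) :
    gradient f x i = fderiv ℝ f x (EuclideanSpace.single i 1) := by
  rw [← inner_gradient_left, EuclideanSpace.inner_single_right]
  simp

theorem lapl_eq_diverg_gradient (f : ℝ^d → ℝ) : lapl f = diverg (gradient f) := by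
  ext x
  simp only [lapl, diverg, gradient_apply]

theorem fderiv_apply_gradient_comm (f g : ℝ^d → ℝ) (x : ℝ^d) :
    fderiv ℝ f x (gradient g x) = fderiv ℝ g x (gradient f x) := by
  rw [← inner_gradient_left, ← inner_gradient_left, real_inner_comm]

theorem fderiv_apply_gradient_self (f : ℝ^d → ℝ) (x : ℝ^d) :
    fderiv ℝ f x (gradient f x) = ‖fderiv ℝ f x‖ ^ 2 := by
  rw [← inner_gradient_left, real_inner_self_eq_norm_sq, ← toDual_gradient,
    LinearIsometryEquiv.norm_map]

theorem contDiff_gradient (hf : ContDiff ℝ n f) (hmn : m + 1 ≤ n) : ContDiff ℝ m (gradient f) := by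
  refine contDiff_euclidean.2 fun i => ?_
  simp only [gradient_apply]
  exact (hf.fderiv_right hmn).clm_apply contDiff_const

theorem hasCompactSupport_gradient (hf : HasCompactSupport f) : HasCompactSupport (gradient f) :=
  (hf.fderiv ℝ).comp_left (map_zero (InnerProductSpace.toDual ℝ ℝ^d).symm)

/-- The trace of an endomorphism of `ℝ^d` in the standard basis, as a continuous linear form;
it turns the derivative of a vector field into its divergence. -/
def traceCLM (d : ℕ) : (ℝ^d →L[ℝ] ℝ^d) →L[ℝ] ℝ :=
  ∑ i, (EuclideanSpace.proj i : ℝ^d →L[ℝ] ℝ) ∘L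
    ContinuousLinearMap.apply ℝ ℝ^d (EuclideanSpace.single i (1 : ℝ))

theorem traceCLM_apply (A : ℝ^d →L[ℝ] ℝ^d) :
    traceCLM d A = ∑ i, A (EuclideanSpace.single i 1) i := by
  simp [traceCLM]

theorem diverg_eq_traceCLM (hF : DifferentiableAt ℝ F x) :
    diverg F x = traceCLM d (fderiv ℝ F x) := by
  rw [traceCLM_apply]
  refine Finset.sum_congr rfl fun i _ => ?_
  have hFi : HasFDerivAt (fun y => F y i)
      ((EuclideanSpace.proj i : ℝ^d →L[ℝ] ℝ) ∘L fderiv ℝ F x) x :=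
    (EuclideanSpace.proj i : ℝ^d →L[ℝ] ℝ).hasFDerivAt.comp x hF.hasFDerivAt
  rw [hFi.fderiv]
  rfl

theorem diverg_sub (hF : DifferentiableAt ℝ F x) (hG : DifferentiableAt ℝ G x) :
    diverg (F - G) x = diverg F x - diverg G x := by
  rw [diverg_eq_traceCLM hF, diverg_eq_traceCLM hG, diverg_eq_traceCLM (hF.sub hG),
    fderiv_sub hF hG, map_sub]

theorem diverg_const_smul (c : ℝ) (hF : DifferentiableAt ℝ F x) :
    diverg (c • F) x = c * diverg F x := by
  rw [diverg_eq_traceCLM hF, diverg_eq_traceCLM (hF.const_smul c), fderiv_const_smul hF,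
    map_smul, smul_eq_mul]

theorem diverg_smul (hf : DifferentiableAt ℝ f x) (hF : DifferentiableAt ℝ F x) :
    diverg (f • F) x = f x * diverg F x + fderiv ℝ f x (F x) := by
  have trace_smulRight : traceCLM d ((fderiv ℝ f x).smulRight (F x)) = fderiv ℝ f x (F x) := by
    conv_rhs => rw [← (EuclideanSpace.basisFun (Fin d) ℝ).sum_repr (F x)]
    simp [traceCLM_apply, mul_comm]
  rw [diverg_eq_traceCLM hF, diverg_eq_traceCLM (hf.smul hF), fderiv_smul hf hF, map_add,
    map_smul, trace_smulRight, smul_eq_mul]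

theorem contDiff_diverg (hF : ContDiff ℝ n F) (hmn : m + 1 ≤ n) : ContDiff ℝ m (diverg F) :=
  ContDiff.sum fun i _ =>
    ((contDiff_euclidean.1 hF i).fderiv_right hmn).clm_apply contDiff_const

theorem contDiff_lapl (hf : ContDiff ℝ n f) (hmn : m + 2 ≤ n) : ContDiff ℝ m (lapl f) := by
  rw [lapl_eq_diverg_gradient]
  refine contDiff_diverg (n := m + 1) (contDiff_gradient hf ?_) le_rfl
  rwa [add_assoc, one_add_one_eq_two]

theorem hasCompactSupport_diverg (hF : HasCompactSupport F) : HasCompactSupport (diverg F) := by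
  refine HasCompactSupport.of_support_subset_isCompact hF fun x hx => ?_
  obtain ⟨i, -, hi⟩ := Finset.exists_ne_zero_of_sum_ne_zero hx
  have hFi : tsupport (fun y => F y i) ⊆ tsupport F :=
    closure_mono fun y hy hF0 => hy (by simp [hF0])
  exact hFi (tsupport_fderiv_apply_subset ℝ _ (subset_tsupport _ hi))

theorem hasCompactSupport_lapl (hf : HasCompactSupport f) : HasCompactSupport (lapl f) := by
  rw [lapl_eq_diverg_gradient]
  exact hasCompactSupport_diverg (hasCompactSupport_gradient hf)

theorem lapl_comp_add_smul (f : ℝ^d → ℝ) (a : ℝ^d) (c : ℝ) (x : ℝ^d) :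
    lapl (fun y => f (a + c • y)) x = c ^ 2 * lapl f (a + c • x) := by
  have fderiv_affine (h : ℝ^d → ℝ) (y : ℝ^d) :
      fderiv ℝ (fun y => h (a + c • y)) y = c • fderiv ℝ h (a + c • y) := by
    rw [fderiv_comp_smul (f := fun y => h (a + y)), fderiv_comp_add_left]
  simp only [lapl, Finset.mul_sum, fderiv_affine, smul_apply]
  refine Finset.sum_congr rfl fun i _ => ?_
  have hconst := congrFun (fderiv_const_smul_field (𝕜 := ℝ)
    (f := fun y => fderiv ℝ f (a + c • y) (EuclideanSpace.single i 1)) c) x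
  rw [Pi.smul_def, Pi.smul_apply,
    fderiv_affine fun y => fderiv ℝ f y (EuclideanSpace.single i 1)] at hconst
  rw [hconst]
  simp only [smul_apply, smul_eq_mul]
  ring

theorem lapl_comp_const_sub (f : ℝ^d → ℝ) (z y : ℝ^d) :
    lapl (fun y => f (z - y)) y = lapl f (z - y) := by
  simpa [sub_eq_add_neg] using lapl_comp_add_smul f z (-1) y

theorem integral_fderiv_apply_eq_zero {E : Type*} [NormedAddCommGroup E] [NormedSpace ℝ E]
    [FiniteDimensional ℝ E] [MeasurableSpace E] [BorelSpace E] {μ : Measure E}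
    [μ.IsAddHaarMeasure] {h : E → ℝ} (hh : ContDiff ℝ 1 h) (hs : HasCompactSupport h) (v : E) :
    ∫ x, fderiv ℝ h x v ∂μ = 0 := by
  have hint : Integrable (fun x => fderiv ℝ h x v) μ :=
    ((hh.continuous_fderiv one_ne_zero).clm_apply continuous_const).integrable_of_hasCompactSupport
      (hs.fderiv_apply ℝ v)
  have := integral_mul_fderiv_eq_neg_fderiv_mul_of_integrable (μ := μ) (f := fun _ => (1 : ℝ))
    (g := h) (v := v) (by simp) (by simpa using hint)
    (by simpa using hh.continuous.integrable_of_hasCompactSupport hs)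
    (fun x _ => differentiableAt_const 1) fun x _ => hh.differentiable one_ne_zero x
  simpa using this

theorem integral_diverg_eq_zero (hF : ContDiff ℝ 1 F) (hs : HasCompactSupport F) :
    ∫ x, diverg F x = 0 := by
  have hFi (i : Fin d) : ContDiff ℝ 1 fun y => F y i := contDiff_euclidean.1 hF i
  have hsi (i : Fin d) : HasCompactSupport fun y => F y i :=
    hs.comp_left (g := fun v : ℝ^d => v i) rfl
  simp only [diverg]
  rw [integral_finsetSum _ fun i _ => (((hFi i).continuous_fderiv one_ne_zero).clm_apply
    continuous_const).integrable_of_hasCompactSupport ((hsi i).fderiv_apply ℝ _)]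
  exact Finset.sum_eq_zero fun i _ => integral_fderiv_apply_eq_zero (hFi i) (hsi i) _

theorem integral_mul_lapl_comm (hf : ContDiff ℝ 2 f) (hg : ContDiff ℝ 2 g)
    (hs : HasCompactSupport f) : ∫ x, f x * lapl g x = ∫ x, lapl f x * g x := by
  have hf' := contDiff_gradient (m := 1) hf (by norm_num)
  have hg' := contDiff_gradient (m := 1) hg (by norm_num)
  have hf1 : ContDiff ℝ 1 f := hf.of_le one_le_two
  have hg1 : ContDiff ℝ 1 g := hg.of_le one_le_two
  have green (x : ℝ^d) : diverg (f • gradient g - g • gradient f) x =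
      f x * lapl g x - lapl f x * g x := by
    have df := hf1.differentiable one_ne_zero x
    have dg := hg1.differentiable one_ne_zero x
    have df' := hf'.differentiable one_ne_zero x
    have dg' := hg'.differentiable one_ne_zero x
    rw [diverg_sub (df.smul dg') (dg.smul df'), diverg_smul df dg', diverg_smul dg df',
      ← lapl_eq_diverg_gradient, ← lapl_eq_diverg_gradient, fderiv_apply_gradient_comm]
    ring
  have hzero : ∫ x, diverg (f • gradient g - g • gradient f) x = 0 :=
    integral_diverg_eq_zero ((hf1.smul hg').sub (hg1.smul hf'))
      (hs.smul_right.sub ((hasCompactSupport_gradient hs).smul_left))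
  have hint₁ : Integrable fun x => f x * lapl g x :=
    (hf.continuous.mul (contDiff_lapl (m := 0) hg (by norm_num)).continuous)
      |>.integrable_of_hasCompactSupport hs.mul_right
  have hint₂ : Integrable fun x => lapl f x * g x :=
    ((contDiff_lapl (m := 0) hf (by norm_num)).continuous.mul hg.continuous)
      |>.integrable_of_hasCompactSupport (hasCompactSupport_lapl hs).mul_right
  simp only [green] at hzero
  rwa [integral_sub hint₁ hint₂, sub_eq_zero] at hzero

end VectorCalculus

section RieszPotential

variable {d : ℕ} {F F' : Type*} [NormedAddCommGroup F] [NormedSpace ℝ F] [NormedAddCommGroup F']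
  [NormedSpace ℝ F'] {lam : ℝ} {ψ : ℝ^d → F} {ρ : ℝ^d → ℝ}

/-- The Riesz potential `∫ ‖y‖ ^ (-lam) • ψ (z - y) dy`, without a normalising constant; vector
values allow it to be applied to derivatives. -/
def riesz (lam : ℝ) (ψ : ℝ^d → F) : ℝ^d → F :=
  (fun y => ‖y‖ ^ (-lam)) ⋆[ContinuousLinearMap.lsmul ℝ ℝ] ψ

theorem riesz_apply (lam : ℝ) (ψ : ℝ^d → F) (z : ℝ^d) :
    riesz lam ψ z = ∫ y, ‖y‖ ^ (-lam) • ψ (z - y) := rfl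

theorem locallyIntegrable_norm_rpow_neg (h0 : 0 < lam) (hd : lam < d) :
    LocallyIntegrable (fun y : ℝ^d => ‖y‖ ^ (-lam)) := by
  have hd0 : 1 ≤ d := by exact_mod_cast h0.trans hd
  refine locallyIntegrable_of_norm_le_rpow (C := 1) (α := lam) (by simpa using hd0)
    (by simpa using hd) (Eventually.of_forall fun x => ?_)
    (measurable_norm.pow_const (-lam)).aestronglyMeasurable
  rw [Real.norm_of_nonneg (by positivity), one_mul]

theorem integrable_norm_rpow_neg_smul_comp_sub (h0 : 0 < lam) (hd : lam < d) (hψ : Continuous ψ)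
    (hs : HasCompactSupport ψ) (z : ℝ^d) : Integrable fun y => ‖y‖ ^ (-lam) • ψ (z - y) :=
  (locallyIntegrable_norm_rpow_neg h0 hd).integrable_smul_right_of_hasCompactSupport
    (hψ.comp (continuous_const.sub continuous_id)) (hs.comp_homeomorph (Homeomorph.subLeft z))

theorem contDiff_riesz {n : ℕ∞} (h0 : 0 < lam) (hd : lam < d) (hψ : ContDiff ℝ n ψ)
    (hs : HasCompactSupport ψ) : ContDiff ℝ n (riesz lam ψ) :=
  hs.contDiff_convolution_right _ (locallyIntegrable_norm_rpow_neg h0 hd) hψ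

theorem fderiv_riesz (h0 : 0 < lam) (hd : lam < d) (hψ : ContDiff ℝ 1 ψ)
    (hs : HasCompactSupport ψ) : fderiv ℝ (riesz lam ψ) = riesz lam (fderiv ℝ ψ) :=
  funext fun z => (hs.hasFDerivAt_convolution_right (ContinuousLinearMap.lsmul ℝ ℝ)
    (locallyIntegrable_norm_rpow_neg h0 hd) hψ z).fderiv

theorem clm_riesz [CompleteSpace F] [CompleteSpace F'] (L : F →L[ℝ] F') (h0 : 0 < lam)
    (hd : lam < d) (hψ : Continuous ψ) (hs : HasCompactSupport ψ) (z : ℝ^d) :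
    L (riesz lam ψ z) = riesz lam (fun y => L (ψ y)) z := by
  rw [riesz_apply, ← L.integral_comp_comm
    (integrable_norm_rpow_neg_smul_comp_sub h0 hd hψ hs z), riesz_apply]
  simp only [map_smul]

theorem gradient_riesz (h0 : 0 < lam) (hd : lam < d) (hρ : ContDiff ℝ 1 ρ)
    (hs : HasCompactSupport ρ) : gradient (riesz lam ρ) = riesz lam (gradient ρ) := by
  ext z i
  have proj_riesz := clm_riesz (EuclideanSpace.proj i : ℝ^d →L[ℝ] ℝ) h0 hd
    (contDiff_gradient (m := 0) hρ (by norm_num)).continuous (hasCompactSupport_gradient hs) z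
  rw [gradient_apply, fderiv_riesz h0 hd hρ hs]
  refine Eq.trans ?_ proj_riesz.symm
  simp only [PiLp.proj_apply, gradient_apply]
  exact clm_riesz (ContinuousLinearMap.apply ℝ ℝ (EuclideanSpace.single i (1 : ℝ))) h0 hd
    (hρ.continuous_fderiv one_ne_zero) (hs.fderiv ℝ) z

theorem diverg_riesz {G : ℝ^d → ℝ^d} (h0 : 0 < lam) (hd : lam < d) (hG : ContDiff ℝ 1 G)
    (hs : HasCompactSupport G) : diverg (riesz lam G) = riesz lam (diverg G) := by
  ext z
  have hdiff := (contDiff_riesz (n := 1) h0 hd hG hs).differentiable one_ne_zero z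
  rw [diverg_eq_traceCLM hdiff, fderiv_riesz h0 hd hG hs,
    clm_riesz _ h0 hd (hG.continuous_fderiv one_ne_zero) (hs.fderiv ℝ)]
  simp only [← diverg_eq_traceCLM (hG.differentiable one_ne_zero _)]

theorem lapl_riesz (h0 : 0 < lam) (hd : lam < d) (hρ : ContDiff ℝ 2 ρ)
    (hs : HasCompactSupport ρ) : lapl (riesz lam ρ) = riesz lam (lapl ρ) := by
  rw [lapl_eq_diverg_gradient, gradient_riesz h0 hd (hρ.of_le one_le_two) hs, diverg_riesz h0 hd
    (contDiff_gradient hρ (by norm_num)) (hasCompactSupport_gradient hs), lapl_eq_diverg_gradient]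

theorem exists_norm_riesz_le (h0 : 0 < lam) (hd : lam < d) (hψ : Continuous ψ)
    (hs : HasCompactSupport ψ) : ∃ M, ∀ z, ‖riesz lam ψ z‖ ≤ M := by
  obtain ⟨K, hK⟩ := hs.exists_bound_of_continuous hψ
  set nearKernel : ℝ^d → ℝ := (ball 0 1).indicator fun y => ‖y‖ ^ (-lam) * K with hnear
  have integrable_near : Integrable nearKernel := by
    rw [integrable_indicator_iff isOpen_ball.measurableSet]
    exact (((locallyIntegrable_norm_rpow_neg h0 hd).integrableOn_isCompact
      (isCompact_closedBall 0 1)).mono_set ball_subset_closedBall).mul_const K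
  have integrable_far : Integrable ψ := hψ.integrable_of_hasCompactSupport hs
  refine ⟨(∫ y, nearKernel y) + ∫ y, ‖ψ y‖, fun z => (norm_integral_le_integral_norm _).trans ?_⟩
  rw [← integral_sub_left_eq_self (fun y => ‖ψ y‖) volume z,
    ← integral_add integrable_near (integrable_far.norm.comp_sub_left z)]
  refine integral_mono (integrable_norm_rpow_neg_smul_comp_sub h0 hd hψ hs z).norm
    (integrable_near.add (integrable_far.norm.comp_sub_left z)) fun y => ?_
  have hy0 : 0 ≤ ‖y‖ ^ (-lam) := by positivity
  simp only [ContinuousLinearMap.lsmul_apply, norm_smul, hnear, Real.norm_of_nonneg hy0]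
  by_cases hy : y ∈ ball (0 : ℝ^d) 1
  · rw [indicator_of_mem hy]
    exact (mul_le_mul_of_nonneg_left (hK (z - y)) hy0).trans
      (le_add_of_nonneg_right (norm_nonneg _))
  · rw [indicator_of_notMem hy, zero_add]
    exact mul_le_of_le_one_left (norm_nonneg _)
      (Real.rpow_le_one_of_one_le_of_nonpos (by simpa using hy) (by linarith))

/-- The smooth approximation `(‖y‖² + ε) ^ (-b)` of the power `‖y‖ ^ (-2b)`. -/
def regularizedPower (b ε : ℝ) (y : ℝ^d) : ℝ := (‖y‖ ^ 2 + ε) ^ (-b)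

variable {b ε : ℝ} {y : ℝ^d}

theorem regularizedPower_nonneg (hε : 0 < ε) : 0 ≤ regularizedPower b ε y := by
  unfold regularizedPower
  positivity

theorem regularizedPower_le_norm_rpow (hb : 0 ≤ b) (hε : 0 < ε) (hy : y ≠ 0) :
    regularizedPower b ε y ≤ ‖y‖ ^ (-(2 * b)) := by
  have hy0 : 0 < ‖y‖ := norm_pos_iff.2 hy
  rw [regularizedPower, ← mul_neg, Real.rpow_mul hy0.le, Real.rpow_two]
  exact Real.rpow_le_rpow_of_nonpos (by positivity) (by linarith) (by linarith)

theorem regularizedPower_add_one_mul_norm_sq_le (hε : 0 < ε) :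
    regularizedPower (b + 1) ε y * ‖y‖ ^ 2 ≤ regularizedPower b ε y := by
  have hq : 0 < ‖y‖ ^ 2 + ε := by positivity
  calc regularizedPower (b + 1) ε y * ‖y‖ ^ 2
      ≤ (‖y‖ ^ 2 + ε) ^ (-(b + 1)) * (‖y‖ ^ 2 + ε) :=
        mul_le_mul_of_nonneg_left (by linarith) (regularizedPower_nonneg hε)
    _ = regularizedPower b ε y := by
        rw [← Real.rpow_add_one hq.ne', regularizedPower]
        congr 1
        ring

theorem tendsto_regularizedPower (hy : y ≠ 0) :
    Tendsto (fun ε => regularizedPower b ε y) (𝓝 0) (𝓝 (‖y‖ ^ (-(2 * b)))) := by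
  have hy0 : 0 < ‖y‖ := norm_pos_iff.2 hy
  have hcont : ContinuousAt (fun ε => regularizedPower b ε y) 0 :=
    (continuousAt_const.add continuousAt_id).rpow_const (Or.inl (by simpa using hy))
  convert hcont.tendsto using 2
  rw [regularizedPower, add_zero, ← mul_neg, Real.rpow_mul hy0.le, Real.rpow_two]

theorem contDiff_regularizedPower {n : WithTop ℕ∞} (b : ℝ) (hε : 0 < ε) :
    ContDiff ℝ n (regularizedPower b ε : ℝ^d → ℝ) :=
  ((contDiff_norm_sq ℝ).add contDiff_const).rpow_const_of_ne fun x => by positivity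

theorem hasFDerivAt_regularizedPower (b : ℝ) (hε : 0 < ε) (y : ℝ^d) :
    HasFDerivAt (regularizedPower b ε)
      ((-(2 * b) * regularizedPower (b + 1) ε y) • innerSL ℝ y) y := by
  have hq : HasFDerivAt (fun y : ℝ^d => ‖y‖ ^ 2 + ε) (2 • innerSL ℝ y) y :=
    (hasStrictFDerivAt_norm_sq y).hasFDerivAt.add_const ε
  refine (hq.rpow_const (p := -b) (Or.inl (by positivity))).congr_fderiv ?_
  rw [regularizedPower, ← Nat.cast_smul_eq_nsmul ℝ, smul_smul, neg_add']
  congr 1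
  push_cast
  ring

theorem gradient_regularizedPower (b : ℝ) (hε : 0 < ε) :
    gradient (regularizedPower b ε : ℝ^d → ℝ) =
      (fun y : ℝ^d => -(2 * b) * regularizedPower (b + 1) ε y) • (id : ℝ^d → ℝ^d) := by
  refine gradient_eq fun y => hasGradientAt_iff_hasFDerivAt.2 ?_
  refine (hasFDerivAt_regularizedPower b hε y).congr_fderiv ?_
  ext v
  simp

theorem diverg_id (x : ℝ^d) : diverg id x = d := by
  rw [diverg_eq_traceCLM differentiableAt_id, traceCLM_apply, fderiv_id]
  simp

theorem lapl_regularizedPower (b : ℝ) (hε : 0 < ε) (y : ℝ^d) :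
    lapl (regularizedPower b ε) y = 2 * b *
      (2 * (b + 1) * (regularizedPower (b + 2) ε y * ‖y‖ ^ 2) -
        d * regularizedPower (b + 1) ε y) := by
  have hderiv := (hasFDerivAt_regularizedPower (b + 1) hε y).const_mul (-(2 * b))
  rw [lapl_eq_diverg_gradient, gradient_regularizedPower b hε,
    diverg_smul hderiv.differentiableAt differentiableAt_id, diverg_id, hderiv.fderiv]
  simp only [smul_apply, innerSL_apply_apply, id, real_inner_self_eq_norm_sq, smul_eq_mul,
    add_assoc, one_add_one_eq_two]
  ring

theorem abs_lapl_regularizedPower_le (hb : 0 < b) (hε : 0 < ε) (hy : y ≠ 0) :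
    |lapl (regularizedPower b ε) y| ≤ 2 * b * (d + 2 * (b + 1)) * ‖y‖ ^ (-(2 * (b + 1))) := by
  set A := regularizedPower (b + 1) ε y
  set B := regularizedPower (b + 2) ε y * ‖y‖ ^ 2
  have hA0 : 0 ≤ A := regularizedPower_nonneg hε
  have hB0 : 0 ≤ B := mul_nonneg (regularizedPower_nonneg hε) (by positivity)
  have hBA : B ≤ A := by
    simpa [add_assoc, one_add_one_eq_two] using
      regularizedPower_add_one_mul_norm_sq_le (b := b + 1) (y := y) hε
  have hdiff : |2 * (b + 1) * B - d * A| ≤ (d + 2 * (b + 1)) * A := by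
    have h1 : 0 ≤ 2 * (b + 1) * B := by positivity
    have h2 : 2 * (b + 1) * B ≤ 2 * (b + 1) * A := by gcongr
    have h3 : 0 ≤ d * A := by positivity
    rw [abs_le]
    constructor <;> linarith
  calc |lapl (regularizedPower b ε) y| = 2 * b * |2 * (b + 1) * B - d * A| := by
        rw [lapl_regularizedPower b hε, abs_mul, abs_of_pos (by positivity)]
    _ ≤ 2 * b * ((d + 2 * (b + 1)) * A) := by gcongr
    _ ≤ 2 * b * ((d + 2 * (b + 1)) * ‖y‖ ^ (-(2 * (b + 1)))) := by
        gcongr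
        exact regularizedPower_le_norm_rpow (by positivity) hε hy
    _ = 2 * b * (d + 2 * (b + 1)) * ‖y‖ ^ (-(2 * (b + 1))) := by ring

theorem ae_ne_zero_of_pos (hd : 0 < d) : ∀ᵐ y : ℝ^d, y ≠ 0 := by
  have : NeZero d := ⟨hd.ne'⟩
  exact Measure.ae_ne volume 0

theorem tendsto_integral_regularizedPower_mul (h0 : 0 < lam) (hd : lam < d) {g : ℝ^d → ℝ}
    (hg : Continuous g) (hs : HasCompactSupport g) (z : ℝ^d) :
    Tendsto (fun ε => ∫ y, regularizedPower (lam / 2) ε y * g (z - y)) (𝓝[>] 0)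
      (𝓝 (riesz lam g z)) := by
  have hne : ∀ᵐ y : ℝ^d, y ≠ 0 := ae_ne_zero_of_pos (by exact_mod_cast h0.trans hd)
  have hlam : -(2 * (lam / 2)) = -lam := by ring
  refine tendsto_integral_filter_of_dominated_convergence
    (fun y => ‖‖y‖ ^ (-lam) • g (z - y)‖) ?_ ?_
    (integrable_norm_rpow_neg_smul_comp_sub h0 hd hg hs z).norm ?_
  · filter_upwards [self_mem_nhdsWithin] with ε hε
    exact ((contDiff_regularizedPower (n := 0) _ hε).continuous.mul
      (hg.comp (continuous_const.sub continuous_id))).aestronglyMeasurable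
  · filter_upwards [self_mem_nhdsWithin] with ε hε
    filter_upwards [hne] with y hy
    rw [norm_mul, norm_smul, Real.norm_of_nonneg (regularizedPower_nonneg hε),
      Real.norm_of_nonneg (by positivity : 0 ≤ ‖y‖ ^ (-lam)), ← hlam]
    exact mul_le_mul_of_nonneg_right (regularizedPower_le_norm_rpow (by positivity) hε hy)
      (norm_nonneg _)
  · filter_upwards [hne] with y hy
    refine Tendsto.mul_const _ ?_
    rw [← hlam]
    exact (tendsto_regularizedPower hy).mono_left nhdsWithin_le_nhds

theorem abs_lapl_riesz_le (h0 : 0 < lam) (hd : lam + 2 < d) (hρ : ContDiff ℝ 2 ρ)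
    (hs : HasCompactSupport ρ) (hρ0 : ∀ x, 0 ≤ ρ x) (z : ℝ^d) :
    |lapl (riesz lam ρ) z| ≤ lam * (d + lam + 2) * riesz (lam + 2) ρ z := by
  have hlam : lam < d := by linarith
  rw [lapl_riesz h0 hlam hρ hs]
  refine le_of_tendsto (tendsto_integral_regularizedPower_mul h0 hlam
    (contDiff_lapl (m := 0) hρ (by norm_num)).continuous (hasCompactSupport_lapl hs) z).abs ?_
  filter_upwards [self_mem_nhdsWithin] with ε hε
  have hρz : ContDiff ℝ 2 fun y => ρ (z - y) := hρ.comp (contDiff_const.sub contDiff_id)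
  have green := integral_mul_lapl_comm hρz (contDiff_regularizedPower (lam / 2) hε)
    (hs.comp_homeomorph (Homeomorph.subLeft z))
  simp only [lapl_comp_const_sub, mul_comm (lapl ρ _)] at green
  rw [← green, ← Real.norm_eq_abs, riesz_apply, ← integral_const_mul]
  refine norm_integral_le_of_norm_le ((integrable_norm_rpow_neg_smul_comp_sub (by positivity) hd
    hρ.continuous hs z).const_mul _) ?_
  filter_upwards [ae_ne_zero_of_pos (d := d) (by exact_mod_cast h0.trans hlam)] with y hy
  have hkernel := abs_lapl_regularizedPower_le (half_pos h0) hε hy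
  rw [show -(2 * (lam / 2 + 1)) = -(lam + 2) by ring] at hkernel
  calc ‖ρ (z - y) * lapl (regularizedPower (lam / 2) ε) y‖
      = ρ (z - y) * |lapl (regularizedPower (lam / 2) ε) y| := by
        rw [norm_mul, Real.norm_of_nonneg (hρ0 _), Real.norm_eq_abs]
    _ ≤ ρ (z - y) * (2 * (lam / 2) * (d + 2 * (lam / 2 + 1)) * ‖y‖ ^ (-(lam + 2))) :=
        mul_le_mul_of_nonneg_left hkernel (hρ0 _)
    _ = lam * (d + lam + 2) * (‖y‖ ^ (-(lam + 2)) • ρ (z - y)) := by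
        rw [smul_eq_mul]
        ring

end RieszPotential

section ConvolutionWithDensity

open ContinuousLinearMap (lsmul)

theorem norm_convolution_le_of_integral_eq_one {E F : Type*} [NormedAddCommGroup E]
    [MeasurableSpace E] {μ : Measure E} [NormedAddCommGroup F] [NormedSpace ℝ F] {u : E → ℝ}
    {G : E → F} {M : ℝ} (hu : Integrable u μ) (hu0 : ∀ x, 0 ≤ u x)
    (hu1 : ∫ x, u x ∂μ = 1) (hM : ∀ z, ‖G z‖ ≤ M) (z : E) :
    ‖(u ⋆[lsmul ℝ ℝ, μ] G) z‖ ≤ M := by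
  calc ‖∫ y, u y • G (z - y) ∂μ‖ ≤ ∫ y, u y * M ∂μ := by
        refine norm_integral_le_of_norm_le (hu.mul_const M) (Eventually.of_forall fun y => ?_)
        rw [norm_smul, Real.norm_of_nonneg (hu0 y)]
        exact mul_le_mul_of_nonneg_left (hM _) (hu0 y)
    _ = M := by rw [integral_mul_const, hu1, one_mul]

variable {E F : Type*} [NormedAddCommGroup E] [NormedSpace ℝ E] [FiniteDimensional ℝ E]
  [MeasurableSpace E] [BorelSpace E] {μ : Measure E}
  [NormedAddCommGroup F] [NormedSpace ℝ F] {u : E → ℝ} {G : E → F} {M M' : ℝ}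

theorem integrable_smul_comp_sub (hu : Integrable u μ) (hG : Continuous G) (hM : ∀ z, ‖G z‖ ≤ M)
    (z : E) : Integrable (fun y => u y • G (z - y)) μ :=
  hu.smul_bdd M (hG.comp (continuous_const.sub continuous_id)).aestronglyMeasurable
    (Eventually.of_forall fun _ => hM _)

theorem hasFDerivAt_convolution_of_bounded (hu : Integrable u μ) (hG : ContDiff ℝ 1 G)
    (hM : ∀ z, ‖G z‖ ≤ M) (hM' : ∀ z, ‖fderiv ℝ G z‖ ≤ M') (z : E) :
    HasFDerivAt (u ⋆[lsmul ℝ ℝ, μ] G) ((u ⋆[lsmul ℝ ℝ, μ] fderiv ℝ G) z) z := by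
  have hG' : Continuous (fderiv ℝ G) := hG.continuous_fderiv one_ne_zero
  refine hasFDerivAt_integral_of_dominated_of_fderiv_le (s := univ)
    (F := fun z y => u y • G (z - y)) (F' := fun z y => u y • fderiv ℝ G (z - y))
    (bound := fun y => ‖u y‖ * M') univ_mem
    (Eventually.of_forall fun z =>
      (integrable_smul_comp_sub hu hG.continuous hM z).aestronglyMeasurable)
    (integrable_smul_comp_sub hu hG.continuous hM z)
    (integrable_smul_comp_sub hu hG' hM' z).aestronglyMeasurable
    (Eventually.of_forall fun y z _ => ?_) (hu.norm.mul_const M')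
    (Eventually.of_forall fun y z _ => ?_)
  · rw [norm_smul]
    exact mul_le_mul_of_nonneg_left (hM' _) (norm_nonneg _)
  · have hshift := (hG.differentiable one_ne_zero (z - y)).hasFDerivAt.comp z
      ((hasFDerivAt_id z).sub_const y)
    exact hshift.const_smul (u y)

theorem contDiff_one_convolution_of_bounded (hu : Integrable u μ) (hG : ContDiff ℝ 1 G)
    (hM : ∀ z, ‖G z‖ ≤ M) (hM' : ∀ z, ‖fderiv ℝ G z‖ ≤ M') :
    ContDiff ℝ 1 (u ⋆[lsmul ℝ ℝ, μ] G) := by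
  have hderiv := hasFDerivAt_convolution_of_bounded hu hG hM hM'
  refine contDiff_one_iff_fderiv.2 ⟨fun z => (hderiv z).differentiableAt, ?_⟩
  rw [funext fun z => (hderiv z).fderiv]
  exact BddAbove.continuous_convolution_right_of_integrable _
    ⟨M', forall_mem_range.2 hM'⟩ hu (hG.continuous_fderiv one_ne_zero)

theorem diverg_convolution {d : ℕ} {u : ℝ^d → ℝ} {G : ℝ^d → ℝ^d} (hu : Integrable u)
    (hG : ContDiff ℝ 1 G) (hM : ∀ z, ‖G z‖ ≤ M) (hM' : ∀ z, ‖fderiv ℝ G z‖ ≤ M') :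
    diverg (u ⋆[lsmul ℝ ℝ] G) = u ⋆[lsmul ℝ ℝ] diverg G := by
  ext z
  have hderiv := hasFDerivAt_convolution_of_bounded hu hG hM hM' z
  have htrace := (traceCLM d).integral_comp_comm
    (integrable_smul_comp_sub hu (hG.continuous_fderiv one_ne_zero) hM' z)
  rw [diverg_eq_traceCLM hderiv.differentiableAt, hderiv.fderiv]
  refine htrace.symm.trans (integral_congr_ae (Eventually.of_forall fun y => ?_))
  simp only [map_smul, ← diverg_eq_traceCLM (hG.differentiable one_ne_zero _)]
  rfl

end ConvolutionWithDensity

section InteractionDrift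

open ContinuousLinearMap (lsmul)

variable {d : ℕ} {lam : ℝ} {ρ u : ℝ^d → ℝ}

/-- The drift `u * ∇(|·|^(-lam) * ρ)` generated by the density `u` through the Riesz interaction
potential mollified by `ρ`. -/
def interactionDrift (lam : ℝ) (ρ u : ℝ^d → ℝ) : ℝ^d → ℝ^d :=
  u ⋆[lsmul ℝ ℝ] gradient (riesz lam ρ)

theorem exists_bounds_gradient_riesz (h0 : 0 < lam) (hd : lam < d) (hρ : ContDiff ℝ 2 ρ)
    (hs : HasCompactSupport ρ) : ContDiff ℝ 1 (gradient (riesz lam ρ)) ∧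
      ∃ M M', (∀ z, ‖gradient (riesz lam ρ) z‖ ≤ M) ∧
        ∀ z, ‖fderiv ℝ (gradient (riesz lam ρ)) z‖ ≤ M' := by
  have hρ' : ContDiff ℝ 1 (gradient ρ) := contDiff_gradient hρ (by norm_num)
  have hs' := hasCompactSupport_gradient hs
  rw [gradient_riesz h0 hd (hρ.of_le one_le_two) hs, fderiv_riesz h0 hd hρ' hs']
  obtain ⟨M, hM⟩ := exists_norm_riesz_le h0 hd hρ'.continuous hs'
  obtain ⟨M', hM'⟩ := exists_norm_riesz_le h0 hd (hρ'.continuous_fderiv one_ne_zero) (hs'.fderiv ℝ)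
  exact ⟨contDiff_riesz h0 hd hρ' hs', M, M', hM, hM'⟩

theorem contDiff_interactionDrift (h0 : 0 < lam) (hd : lam < d) (hρ : ContDiff ℝ 2 ρ)
    (hs : HasCompactSupport ρ) (hu : Integrable u) : ContDiff ℝ 1 (interactionDrift lam ρ u) := by
  obtain ⟨hG, M, M', hM, hM'⟩ := exists_bounds_gradient_riesz h0 hd hρ hs
  exact contDiff_one_convolution_of_bounded hu hG hM hM'

theorem diverg_interactionDrift (h0 : 0 < lam) (hd : lam < d) (hρ : ContDiff ℝ 2 ρ)
    (hs : HasCompactSupport ρ) (hu : Integrable u) :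
    diverg (interactionDrift lam ρ u) = u ⋆[lsmul ℝ ℝ] lapl (riesz lam ρ) := by
  obtain ⟨hG, M, M', hM, hM'⟩ := exists_bounds_gradient_riesz h0 hd hρ hs
  rw [lapl_eq_diverg_gradient]
  exact diverg_convolution hu hG hM hM'

theorem exists_interactionDrift_bounds (h0 : 0 < lam) (hd : lam < d) (hρ : ContDiff ℝ 2 ρ)
    (hs : HasCompactSupport ρ) : ∃ B L, ∀ u : ℝ^d → ℝ, Integrable u → (∀ x, 0 ≤ u x) →
      ∫ x, u x = 1 → ∀ z, ‖interactionDrift lam ρ u z‖ ≤ B ∧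
        |diverg (interactionDrift lam ρ u) z| ≤ L := by
  obtain ⟨-, B, -, hB, -⟩ := exists_bounds_gradient_riesz h0 hd hρ hs
  obtain ⟨L, hL⟩ := exists_norm_riesz_le h0 hd
    (contDiff_lapl (m := 0) hρ (by norm_num)).continuous (hasCompactSupport_lapl hs)
  refine ⟨B, L, fun u hu hu0 hu1 z => ⟨norm_convolution_le_of_integral_eq_one hu hu0 hu1 hB z, ?_⟩⟩
  rw [diverg_interactionDrift h0 hd hρ hs hu, lapl_riesz h0 hd hρ hs]
  exact norm_convolution_le_of_integral_eq_one hu hu0 hu1 hL z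

end InteractionDrift

section FormBound

open ContinuousLinearMap (lsmul)

theorem exists_lintegral_sq_rpow_le_lintegral_fderiv_sq {E : Type*} [NormedAddCommGroup E]
    [NormedSpace ℝ E] [MeasurableSpace E] [BorelSpace E] [FiniteDimensional ℝ E] (μ : Measure E)
    [μ.IsAddHaarMeasure] {r : ℝ} (hn : 2 < finrank ℝ E)
    (hr : r = finrank ℝ E / (finrank ℝ E - 2)) :
    ∃ S : ℝ≥0, ∀ v : E → ℝ, ContDiff ℝ 1 v → HasCompactSupport v →
      (∫⁻ x, (‖v x‖ₑ ^ 2) ^ r ∂μ) ^ (1 / r) ≤ S * ∫⁻ x, ‖fderiv ℝ v x‖ₑ ^ 2 ∂μ := by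
  have hn' : (2 : ℝ) < finrank ℝ E := by exact_mod_cast hn
  have hr0 : 0 < r := hr ▸ div_pos (by linarith) (by linarith)
  lift r to ℝ≥0 using hr0.le
  have hr0' : r ≠ 0 := by exact_mod_cast hr0.ne'
  refine ⟨eLpNormLESNormFDerivOfEqInnerConst μ (2 : ℝ≥0) ^ 2, fun v hv hvs => ?_⟩
  have hexp : ((2 * r : ℝ≥0) : ℝ)⁻¹ = ((2 : ℝ≥0)⁻¹ : ℝ≥0) - (finrank ℝ E : ℝ)⁻¹ := by
    push_cast
    rw [hr]
    have : (finrank ℝ E : ℝ) - 2 ≠ 0 := by linarith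
    field_simp
  have hsob := eLpNorm_le_eLpNorm_fderiv_of_eq_inner μ hv hvs (p := 2) one_le_two (by omega) hexp
  have hleft : (∫⁻ x, (‖v x‖ₑ ^ 2) ^ (r : ℝ) ∂μ) ^ (1 / (r : ℝ)) =
      eLpNorm v (2 * r : ℝ≥0) μ ^ 2 := by
    have hpow := eLpNorm_nnreal_pow_eq_lintegral (μ := μ) (f := v) (p := 2 * r) (by positivity)
    simp_rw [NNReal.coe_mul, ENNReal.rpow_mul, NNReal.coe_ofNat, ENNReal.rpow_ofNat] at hpow
    rw [← hpow, ← ENNReal.rpow_mul, mul_one_div_cancel (by exact_mod_cast hr0'), ENNReal.rpow_one]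
  have hright : ∫⁻ x, ‖fderiv ℝ v x‖ₑ ^ 2 ∂μ = eLpNorm (fderiv ℝ v) (2 : ℝ≥0) μ ^ 2 := by
    simpa only [NNReal.coe_ofNat, ENNReal.rpow_ofNat] using
      (eLpNorm_nnreal_pow_eq_lintegral (μ := μ) (f := fderiv ℝ v) (two_ne_zero (α := ℝ≥0))).symm
  rw [hleft, hright, ENNReal.coe_pow, ← mul_pow]
  gcongr

variable {d : ℕ} {lam : ℝ}

/-- The potential `W` is bounded relative to the Dirichlet form, in the sense of quadratic forms:
`∫ v² |W| ≤ C ∫ |∇v|²` for every test function `v`. -/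
def IsFormBounded (C : ℝ≥0∞) (W : ℝ^d → ℝ) : Prop :=
  ∀ v : ℝ^d → ℝ, ContDiff ℝ 1 v → HasCompactSupport v →
    ∫⁻ x, ‖v x‖ₑ ^ 2 * ‖W x‖ₑ ≤ C * ∫⁻ x, ‖fderiv ℝ v x‖ₑ ^ 2

theorem IsFormBounded.mono {C C' : ℝ≥0∞} {W : ℝ^d → ℝ} (h : IsFormBounded C W) (hC : C ≤ C') :
    IsFormBounded C' W :=
  fun v hv hvs => (h v hv hvs).trans (by gcongr)

theorem IsFormBounded.const_mul {C : ℝ≥0∞} {W : ℝ^d → ℝ} (h : IsFormBounded C W) (c : ℝ) :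
    IsFormBounded (‖c‖ₑ * C) fun x => c * W x := by
  intro v hv hvs
  simp_rw [enorm_mul, mul_left_comm (‖v _‖ₑ ^ 2)]
  rw [lintegral_const_mul' _ _ enorm_ne_top, mul_assoc]
  gcongr
  exact h v hv hvs

theorem IsFormBounded.integral_sq_mul_abs_le {c : ℝ} {W : ℝ^d → ℝ}
    (h : IsFormBounded (ENNReal.ofReal c) W) (hc : 0 ≤ c) (hW : Continuous W) {v : ℝ^d → ℝ}
    (hv : ContDiff ℝ 1 v) (hvs : HasCompactSupport v) :
    ∫ x, v x ^ 2 * |W x| ≤ c * ∫ x, ‖fderiv ℝ v x‖ ^ 2 := by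
  have hfderiv : Continuous fun x => ‖fderiv ℝ v x‖ ^ 2 :=
    (hv.continuous_fderiv one_ne_zero).norm.pow 2
  have hint : Integrable fun x => ‖fderiv ℝ v x‖ ^ 2 :=
    hfderiv.integrable_of_hasCompactSupport
      ((hvs.fderiv ℝ).comp_left (g := fun L => ‖L‖ ^ 2) (by simp))
  have hv0 : 0 ≤ c * ∫ x, ‖fderiv ℝ v x‖ ^ 2 := by positivity
  have hWc : Continuous fun x => v x ^ 2 * |W x| := (hv.continuous.pow 2).mul hW.abs
  rw [integral_eq_lintegral_of_nonneg_ae (Eventually.of_forall fun x => by positivity)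
    hWc.aestronglyMeasurable]
  refine ENNReal.toReal_le_of_le_ofReal hv0 ?_
  rw [ENNReal.ofReal_mul hc, ofReal_integral_eq_lintegral_ofReal hint
    (Eventually.of_forall fun x => by positivity)]
  refine le_of_eq_of_le (lintegral_congr fun x => ?_) ((h v hv hvs).trans_eq
    (congrArg _ (lintegral_congr fun x => ?_)))
  · rw [← sq_abs, ENNReal.ofReal_mul (by positivity), ENNReal.ofReal_pow (abs_nonneg _),
      ← Real.norm_eq_abs, ← Real.norm_eq_abs, ofReal_norm, ofReal_norm]
  · rw [← ofReal_norm, ENNReal.ofReal_pow (norm_nonneg _)]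

theorem enorm_lapl_riesz_le {ρ : ℝ^d → ℝ} (h0 : 0 < lam) (hd : lam + 2 < d) (hρ : ContDiff ℝ 2 ρ)
    (hs : HasCompactSupport ρ) (hρ0 : ∀ x, 0 ≤ ρ x) (z : ℝ^d) :
    ‖lapl (riesz lam ρ) z‖ₑ ≤ ENNReal.ofReal (lam * (d + lam + 2)) *
      ∫⁻ y, ENNReal.ofReal (ρ y) * ‖z - y‖ₑ ^ (-(lam + 2)) := by
  have hint := integrable_norm_rpow_neg_smul_comp_sub (by linarith) hd hρ.continuous hs z
  rw [← ofReal_norm]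
  refine (ENNReal.ofReal_le_ofReal (abs_lapl_riesz_le h0 hd hρ hs hρ0 z)).trans ?_
  rw [ENNReal.ofReal_mul (by positivity), riesz_apply,
    ofReal_integral_eq_lintegral_ofReal hint
      (Eventually.of_forall fun y => smul_nonneg (by positivity) (hρ0 _)),
    ← lintegral_sub_left_eq_self _ z]
  gcongr with y
  rw [sub_sub_cancel, smul_eq_mul, mul_comm, ENNReal.ofReal_mul (hρ0 y)]
  gcongr
  rcases eq_or_ne (z - y) 0 with h | h
  · rw [h, norm_zero, Real.zero_rpow (by linarith), ENNReal.ofReal_zero]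
    exact zero_le
  · exact (ofReal_norm_rpow h _).le

theorem enorm_diverg_interactionDrift_le {ρ u : ℝ^d → ℝ} (h0 : 0 < lam) (hd : lam + 2 < d)
    (hρ : ContDiff ℝ 2 ρ) (hs : HasCompactSupport ρ) (hρ0 : ∀ x, 0 ≤ ρ x) (hu : Integrable u)
    (x : ℝ^d) : ‖diverg (interactionDrift lam ρ u) x‖ₑ ≤ ENNReal.ofReal (lam * (d + lam + 2)) *
      ∫⁻ y, ‖u y‖ₑ * ∫⁻ z, ENNReal.ofReal (ρ z) * ‖x - y - z‖ₑ ^ (-(lam + 2)) := by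
  rw [diverg_interactionDrift h0 (by linarith) hρ hs hu, ← lintegral_const_mul' _ _ (by simp)]
  refine (enorm_integral_le_lintegral_enorm _).trans (lintegral_mono fun y => ?_)
  rw [ContinuousLinearMap.lsmul_apply, enorm_smul, mul_left_comm]
  gcongr
  exact enorm_lapl_riesz_le h0 hd hρ hs hρ0 (x - y)

theorem exists_lintegral_sq_mul_lintegral_riesz_le (h0 : 0 < lam) (hd : lam + 2 < d) :
    ∃ C : ℝ≥0, ∀ (ρ : ℝ^d → ℝ≥0∞) (u v : ℝ^d → ℝ), Measurable ρ → Measurable u → ContDiff ℝ 1 v →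
      HasCompactSupport v → ∫⁻ x, ‖v x‖ₑ ^ 2 *
          ∫⁻ y, ‖u y‖ₑ * ∫⁻ z, ρ z * ‖x - y - z‖ₑ ^ (-(lam + 2)) ≤
        C * (∫⁻ z, ρ z) * eLpNorm u (ENNReal.ofReal (d / (d - lam))) volume *
          ∫⁻ x, ‖fderiv ℝ v x‖ₑ ^ 2 := by
  have hd2 : (2 : ℝ) < d := by linarith
  have hs1 : 1 < d / (d - lam) := by rw [one_lt_div] <;> linarith
  obtain ⟨S, hS⟩ := exists_lintegral_sq_rpow_le_lintegral_fderiv_sq (volume : Measure ℝ^d)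
    (by rw [finrank_euclideanSpace_fin]; exact_mod_cast hd2) rfl
  obtain ⟨H, hH, hHLS⟩ := hardyLittlewoodSobolev_mollified (μ := (volume : Measure ℝ^d))
    (a := lam + 2) (r := d / (d - 2)) (s := d / (d - lam)) (by rw [one_lt_div] <;> linarith) hs1
    (by linarith) (by simpa using hd) (by
      rw [finrank_euclideanSpace_fin, one_div_div, one_div_div]
      field_simp
      ring)
  rw [finrank_euclideanSpace_fin] at hS
  lift H to ℝ≥0 using hH
  refine ⟨H * S, fun ρ u v hρ hu hv hvs => ?_⟩
  have hbound := hHLS (fun x => ‖v x‖₊ ^ 2) (fun x => ‖u x‖₊) ρ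
    (hv.continuous.measurable.nnnorm.pow_const 2) hu.nnnorm hρ
  simp only [ENNReal.coe_pow, ← enorm_eq_nnnorm] at hbound
  rw [eLpNorm_eq_lintegral_rpow_enorm_toReal (by simpa using by linarith) (by simp),
    ENNReal.toReal_ofReal (by linarith)]
  calc _ ≤ _ := hbound
    _ ≤ (∫⁻ z, ρ z) * (H * (S * ∫⁻ x, ‖fderiv ℝ v x‖ₑ ^ 2) *
          (∫⁻ y, ‖u y‖ₑ ^ ((d : ℝ) / (d - lam))) ^ (1 / ((d : ℝ) / (d - lam)))) := by
        gcongr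
        exact hS v hv hvs
    _ = _ := by
        push_cast
        ring

theorem exists_isFormBounded_diverg_interactionDrift (h0 : 0 < lam) (hd : lam + 2 < d) :
    ∃ C : ℝ≥0, ∀ ρ u : ℝ^d → ℝ, ContDiff ℝ 2 ρ → HasCompactSupport ρ → (∀ x, 0 ≤ ρ x) →
      ∫ x, ρ x = 1 → Measurable u → Integrable u →
        IsFormBounded (C * eLpNorm u (ENNReal.ofReal (d / (d - lam))) volume)
          (diverg (interactionDrift lam ρ u)) := by
  obtain ⟨C, hC⟩ := exists_lintegral_sq_mul_lintegral_riesz_le h0 hd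
  refine ⟨(lam * (d + lam + 2)).toNNReal * C, ?_⟩
  intro ρ u hρ hρs hρ0 hρ1 hum hu v hv hvs
  have hmass : ∫⁻ z, ENNReal.ofReal (ρ z) = 1 := by
    rw [← ofReal_integral_eq_lintegral_ofReal
      (hρ.continuous.integrable_of_hasCompactSupport hρs) (Eventually.of_forall hρ0), hρ1,
      ENNReal.ofReal_one]
  have hbound := hC (fun x => ENNReal.ofReal (ρ x)) u v hρ.continuous.measurable.ennreal_ofReal
    hum hv hvs
  rw [hmass, mul_one] at hbound
  calc ∫⁻ x, ‖v x‖ₑ ^ 2 * ‖diverg (interactionDrift lam ρ u) x‖ₑ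
      ≤ ∫⁻ x, ENNReal.ofReal (lam * (d + lam + 2)) * (‖v x‖ₑ ^ 2 *
          ∫⁻ y, ‖u y‖ₑ * ∫⁻ z, ENNReal.ofReal (ρ z) * ‖x - y - z‖ₑ ^ (-(lam + 2))) := by
        refine lintegral_mono fun x => ?_
        rw [mul_left_comm]
        gcongr
        exact enorm_diverg_interactionDrift_le h0 hd hρ hρs hρ0 hu x
    _ ≤ ENNReal.ofReal (lam * (d + lam + 2)) * (C *
          eLpNorm u (ENNReal.ofReal (d / (d - lam))) volume * ∫⁻ x, ‖fderiv ℝ v x‖ₑ ^ 2) := by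
        rw [lintegral_const_mul' _ _ (by simp)]
        gcongr
    _ = _ := by
        rw [ENNReal.ofReal]
        push_cast
        ring

end FormBound

section EntropyWeights

/-- A bounded increasing weight `θ` on `[0, ∞)`, with derivatives `θ'` and `θ''`, which grows at
most like `y ^ q`. The entropy density `y * θ y` is then convex, of growth between `y` and
`y ^ (1 + q)`, and serves as a regularisation of `y ^ (1 + q)`. -/
structure IsEntropyWeight (q K : ℝ) (θ θ' θ'' : ℝ → ℝ) : Prop where
  hasDerivAt : ∀ y, 0 ≤ y → HasDerivAt θ (θ' y) y
  hasDerivAt_deriv : ∀ y, 0 ≤ y → HasDerivAt θ' (θ'' y) y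
  continuousOn_deriv_deriv : ContinuousOn θ'' (Ici 0)
  nonneg : ∀ y, 0 ≤ y → 0 ≤ θ y
  le : ∀ y, 0 ≤ y → θ y ≤ K
  deriv_pos : ∀ y, 0 ≤ y → 0 < θ' y
  mul_deriv_le : ∀ y, 0 ≤ y → y * θ' y ≤ q * θ y
  mul_deriv_deriv_le : ∀ y, 0 ≤ y → y * θ'' y ≤ q * θ' y
  convex : ∀ y, 0 ≤ y → 0 ≤ 2 * θ' y + y * θ'' y

namespace IsEntropyWeight

variable {q K y : ℝ} {θ θ' θ'' : ℝ → ℝ}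

theorem bound_nonneg (h : IsEntropyWeight q K θ θ' θ'') : 0 ≤ K :=
  (h.nonneg 0 le_rfl).trans (h.le 0 le_rfl)

theorem hasDerivAt_entropy (h : IsEntropyWeight q K θ θ' θ'') (hy : 0 ≤ y) :
    HasDerivAt (fun y => y * θ y) (θ y + y * θ' y) y := by
  simpa using (hasDerivAt_id' y).fun_mul (h.hasDerivAt y hy)

theorem hasDerivAt_deriv_entropy (h : IsEntropyWeight q K θ θ' θ'') (hy : 0 ≤ y) :
    HasDerivAt (fun y => θ y + y * θ' y) (2 * θ' y + y * θ'' y) y := by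
  refine ((h.hasDerivAt y hy).fun_add
    ((hasDerivAt_id' y).fun_mul (h.hasDerivAt_deriv y hy))).congr_deriv ?_
  ring

theorem continuousOn_deriv (h : IsEntropyWeight q K θ θ' θ'') : ContinuousOn θ' (Ici 0) :=
  fun y hy => (h.hasDerivAt_deriv y hy).continuousAt.continuousWithinAt

theorem continuousOn_deriv_deriv_entropy (h : IsEntropyWeight q K θ θ' θ'') :
    ContinuousOn (fun y => 2 * θ' y + y * θ'' y) (Ici 0) :=
  (h.continuousOn_deriv.const_mul 2).add (continuousOn_id.mul h.continuousOn_deriv_deriv)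

theorem hasDerivAt_mul_sqrt_deriv (h : IsEntropyWeight q K θ θ' θ'') (hy : 0 ≤ y) :
    HasDerivAt (fun y => y * √(θ' y)) ((2 * θ' y + y * θ'' y) / (2 * √(θ' y))) y := by
  have hpos := h.deriv_pos y hy
  have : 0 < √(θ' y) := Real.sqrt_pos.2 hpos
  refine ((hasDerivAt_id' y).fun_mul
    ((h.hasDerivAt_deriv y hy).sqrt hpos.ne')).congr_deriv ?_
  field_simp
  rw [Real.sq_sqrt hpos.le]
  ring

theorem continuousOn_deriv_mul_sqrt_deriv (h : IsEntropyWeight q K θ θ' θ'') :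
    ContinuousOn (fun y => (2 * θ' y + y * θ'' y) / (2 * √(θ' y))) (Ici 0) :=
  h.continuousOn_deriv_deriv_entropy.div (h.continuousOn_deriv.sqrt.const_mul 2) fun y hy =>
    (mul_pos two_pos (Real.sqrt_pos.2 (h.deriv_pos y hy))).ne'

theorem sq_deriv_mul_sqrt_deriv_le (h : IsEntropyWeight q K θ θ' θ'') (hy : 0 ≤ y) :
    ((2 * θ' y + y * θ'' y) / (2 * √(θ' y))) ^ 2 ≤ (2 + q) / 4 * (2 * θ' y + y * θ'' y) := by
  have hpos := h.deriv_pos y hy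
  have hle : 2 * θ' y + y * θ'' y ≤ (2 + q) * θ' y := by linarith [h.mul_deriv_deriv_le y hy]
  rw [div_pow, mul_pow, Real.sq_sqrt hpos.le, div_le_iff₀ (by positivity)]
  linarith [mul_le_mul_of_nonneg_left hle (h.convex y hy)]

theorem sq_mul_sqrt_deriv (h : IsEntropyWeight q K θ θ' θ'') (hy : 0 ≤ y) :
    (y * √(θ' y)) ^ 2 = y * (y * θ' y) := by
  rw [mul_pow, Real.sq_sqrt (h.deriv_pos y hy).le]
  ring

theorem entropy_nonneg (h : IsEntropyWeight q K θ θ' θ'') (hy : 0 ≤ y) : 0 ≤ y * θ y :=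
  mul_nonneg hy (h.nonneg y hy)

theorem entropy_le (h : IsEntropyWeight q K θ θ' θ'') (hy : 0 ≤ y) : y * θ y ≤ K * y := by
  rw [mul_comm K]
  exact mul_le_mul_of_nonneg_left (h.le y hy) hy

theorem sq_mul_sqrt_deriv_le (h : IsEntropyWeight q K θ θ' θ'') (hy : 0 ≤ y) :
    (y * √(θ' y)) ^ 2 ≤ q * (y * θ y) := by
  rw [h.sq_mul_sqrt_deriv hy, mul_left_comm q]
  exact mul_le_mul_of_nonneg_left (h.mul_deriv_le y hy) hy

end IsEntropyWeight

/-- The logarithmic derivative of `y ↦ (y + ε) / (1 + ε * (y + ε))`. -/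
def truncationRate (ε y : ℝ) : ℝ := ((y + ε) * (1 + ε * (y + ε)))⁻¹

/-- The weight `y ^ q` smoothed at `0` and truncated at height `ε ^ (-q)`. -/
def truncatedPower (q ε y : ℝ) : ℝ := ((y + ε) / (1 + ε * (y + ε))) ^ q

variable {q ε y : ℝ}

theorem truncationRate_pos (hε : 0 < ε) (hy : 0 ≤ y) : 0 < truncationRate ε y := by
  unfold truncationRate
  positivity

theorem truncatedPower_pos (q : ℝ) (hε : 0 < ε) (hy : 0 ≤ y) : 0 < truncatedPower q ε y := by
  unfold truncatedPower
  positivity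

theorem mul_truncationRate_mul_le_one (hε : 0 < ε) (hy : 0 ≤ y) :
    y * truncationRate ε y * (1 + ε * (y + ε)) ≤ 1 := by
  have hcancel : y * truncationRate ε y * (1 + ε * (y + ε)) = y / (y + ε) := by
    unfold truncationRate
    field_simp
  rw [hcancel, div_le_one (by positivity)]
  linarith

theorem mul_truncationRate_le_one (hε : 0 < ε) (hy : 0 ≤ y) : y * truncationRate ε y ≤ 1 := by
  have hyg : 0 ≤ y * truncationRate ε y := mul_nonneg hy (truncationRate_pos hε hy).le
  refine le_trans ?_ (mul_truncationRate_mul_le_one hε hy)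
  exact le_mul_of_one_le_right hyg (le_add_of_nonneg_right (by positivity))

theorem hasDerivAt_truncationRate (hε : 0 < ε) (hy : 0 ≤ y) :
    HasDerivAt (truncationRate ε) (-(1 + 2 * ε * (y + ε)) * truncationRate ε y ^ 2) y := by
  have hshift : HasDerivAt (fun y => y + ε) 1 y := (hasDerivAt_id y).add_const ε
  refine ((hshift.fun_mul ((hshift.const_mul ε).const_add 1)).fun_inv
    (by positivity)).congr_deriv ?_
  unfold truncationRate
  field_simp
  ring

theorem hasDerivAt_truncatedPower (q : ℝ) (hε : 0 < ε) (hy : 0 ≤ y) :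
    HasDerivAt (truncatedPower q ε) (q * truncatedPower q ε y * truncationRate ε y) y := by
  have hshift : HasDerivAt (fun y => y + ε) 1 y := (hasDerivAt_id y).add_const ε
  have hbase : (y + ε) / (1 + ε * (y + ε)) ≠ 0 := by positivity
  refine ((hshift.fun_div ((hshift.const_mul ε).const_add 1) (by positivity)).rpow_const
    (Or.inl hbase)).congr_deriv ?_
  rw [Real.rpow_sub_one hbase]
  unfold truncatedPower truncationRate
  field_simp
  ring

theorem truncatedPower_le_add_one_rpow (hq : 0 ≤ q) (hε : 0 < ε) (hε1 : ε ≤ 1) (hy : 0 ≤ y) :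
    truncatedPower q ε y ≤ (y + 1) ^ q := by
  refine Real.rpow_le_rpow (by positivity) ?_ hq
  refine (div_le_self (by positivity) (le_add_of_nonneg_right (by positivity))).trans ?_
  linarith

theorem truncatedPower_le_inv_rpow (hq : 0 ≤ q) (hε : 0 < ε) (hy : 0 ≤ y) :
    truncatedPower q ε y ≤ ε⁻¹ ^ q := by
  refine Real.rpow_le_rpow (by positivity) ?_ hq
  rw [div_le_iff₀ (by positivity), mul_add, inv_mul_cancel_left₀ hε.ne']
  linarith [inv_pos.2 hε]

theorem isEntropyWeight_truncatedPower (hq : 0 < q) (hε : 0 < ε) :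
    IsEntropyWeight q (ε⁻¹ ^ q) (truncatedPower q ε)
      (fun y => q * truncatedPower q ε y * truncationRate ε y)
      (fun y => q * truncatedPower q ε y * truncationRate ε y *
        (truncationRate ε y * (q - 1 - 2 * ε * (y + ε)))) where
  hasDerivAt y hy := hasDerivAt_truncatedPower q hε hy
  hasDerivAt_deriv y hy := by
    refine (((hasDerivAt_truncatedPower q hε hy).const_mul q).fun_mul
      (hasDerivAt_truncationRate hε hy)).congr_deriv ?_
    ring
  continuousOn_deriv_deriv := by
    have hθ : ContinuousOn (truncatedPower q ε) (Ici 0) := fun y hy =>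
      (hasDerivAt_truncatedPower q hε hy).continuousAt.continuousWithinAt
    have hg : ContinuousOn (truncationRate ε) (Ici 0) := fun y hy =>
      (hasDerivAt_truncationRate hε hy).continuousAt.continuousWithinAt
    exact ((hθ.const_mul q).mul hg).mul (hg.mul (by fun_prop))
  nonneg y hy := (truncatedPower_pos q hε hy).le
  le y hy := truncatedPower_le_inv_rpow hq.le hε hy
  deriv_pos y hy := mul_pos (mul_pos hq (truncatedPower_pos q hε hy)) (truncationRate_pos hε hy)
  mul_deriv_le y hy := by
    have hθ : 0 ≤ q * truncatedPower q ε y := by have := truncatedPower_pos q hε hy; positivity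
    rw [mul_left_comm]
    exact mul_le_of_le_one_right hθ (mul_truncationRate_le_one hε hy)
  mul_deriv_deriv_le y hy := by
    have hθ := truncatedPower_pos q hε hy
    have hg := truncationRate_pos hε hy
    have hyg1 := mul_truncationRate_le_one hε hy
    rw [mul_left_comm, mul_comm q (q * _ * _), ← mul_assoc y]
    refine mul_le_mul_of_nonneg_left ?_ (by positivity)
    have hrate : y * truncationRate ε y * (q - 1 - 2 * ε * (y + ε)) ≤
        y * truncationRate ε y * q := by
      gcongr
      linarith [show 0 ≤ 2 * ε * (y + ε) by positivity]
    exact hrate.trans (mul_le_of_le_one_left hq.le hyg1)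
  convex y hy := by
    have hθ := truncatedPower_pos q hε hy
    have hg := truncationRate_pos hε hy
    have hyg1 := mul_truncationRate_mul_le_one hε hy
    have hyg : 0 ≤ (1 + q) * (y * truncationRate ε y) := by positivity
    rw [mul_comm 2, mul_left_comm y, ← mul_add]
    refine mul_nonneg (by positivity) ?_
    linarith

theorem tendsto_mul_truncatedPower (hq : 0 < q) (hy : 0 ≤ y) :
    Tendsto (fun ε => y * truncatedPower q ε y) (𝓝 0) (𝓝 (y ^ (1 + q))) := by
  have hlim : y ^ (1 + q) = y * ((y + 0) / (1 + 0 * (y + 0))) ^ q := by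
    rw [Real.rpow_add_of_nonneg hy zero_le_one hq.le, Real.rpow_one]
    simp
  have hε : Tendsto (fun ε : ℝ => ε) (𝓝 0) (𝓝 0) := tendsto_id
  rw [hlim]
  exact (((hε.const_add y).div ((hε.mul (hε.const_add y)).const_add 1) (by simp)).rpow_const
    (Or.inr hq.le)).const_mul y

end EntropyWeights

section Composition

variable {g g' g'' : ℝ → ℝ}

theorem hasFDerivAt_comp_of_nonneg {E : Type*} [NormedAddCommGroup E] [NormedSpace ℝ E] {u : E → ℝ}
    {x : E} (hg : ∀ y, 0 ≤ y → HasDerivAt g (g' y) y) (hu : DifferentiableAt ℝ u x)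
    (hux : 0 ≤ u x) : HasFDerivAt (fun z => g (u z)) (g' (u x) • fderiv ℝ u x) x :=
  (hg _ hux).comp_hasFDerivAt (h₂ := g) x hu.hasFDerivAt

theorem contDiff_one_comp_of_nonneg {E : Type*} [NormedAddCommGroup E] [NormedSpace ℝ E]
    {u : E → ℝ} (hg : ∀ y, 0 ≤ y → HasDerivAt g (g' y) y) (hg' : ContinuousOn g' (Ici 0))
    (hu : ContDiff ℝ 1 u) (hu0 : ∀ x, 0 ≤ u x) : ContDiff ℝ 1 (fun x => g (u x)) := by
  have hderiv : ∀ x, HasFDerivAt (fun z => g (u z)) (g' (u x) • fderiv ℝ u x) x := fun x =>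
    hasFDerivAt_comp_of_nonneg hg (hu.differentiable one_ne_zero x) (hu0 x)
  refine contDiff_one_iff_fderiv.2 ⟨fun x => (hderiv x).differentiableAt, ?_⟩
  rw [funext fun x => (hderiv x).fderiv]
  exact (hg'.comp_continuous hu.continuous hu0).smul (hu.continuous_fderiv one_ne_zero)

theorem contDiff_two_comp_of_nonneg {E : Type*} [NormedAddCommGroup E] [NormedSpace ℝ E]
    {u : E → ℝ} (hg : ∀ y, 0 ≤ y → HasDerivAt g (g' y) y)
    (hg' : ∀ y, 0 ≤ y → HasDerivAt g' (g'' y) y) (hg'' : ContinuousOn g'' (Ici 0))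
    (hu : ContDiff ℝ 2 u) (hu0 : ∀ x, 0 ≤ u x) : ContDiff ℝ 2 (fun x => g (u x)) := by
  have hderiv : ∀ x, HasFDerivAt (fun z => g (u z)) (g' (u x) • fderiv ℝ u x) x := fun x =>
    hasFDerivAt_comp_of_nonneg hg (hu.differentiable two_ne_zero x) (hu0 x)
  rw [← one_add_one_eq_two, contDiff_succ_iff_fderiv]
  refine ⟨fun x => (hderiv x).differentiableAt, by simp, ?_⟩
  rw [funext fun x => (hderiv x).fderiv]
  exact (contDiff_one_comp_of_nonneg hg' hg'' (hu.of_le one_le_two) hu0).smul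
    (hu.fderiv_right (by norm_num))

variable {d : ℕ} {u : ℝ^d → ℝ}

theorem gradient_comp_of_nonneg (hg : ∀ y, 0 ≤ y → HasDerivAt g (g' y) y)
    (hu : Differentiable ℝ u) (hu0 : ∀ x, 0 ≤ u x) :
    gradient (fun x => g (u x)) = (fun x => g' (u x)) • gradient u := by
  ext1 x
  simp [gradient, (hasFDerivAt_comp_of_nonneg hg (hu x) (hu0 x)).fderiv]

theorem lapl_comp_of_nonneg (hg : ∀ y, 0 ≤ y → HasDerivAt g (g' y) y)
    (hg' : ∀ y, 0 ≤ y → HasDerivAt g' (g'' y) y) (hu : ContDiff ℝ 2 u) (hu0 : ∀ x, 0 ≤ u x)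
    (x : ℝ^d) :
    lapl (fun z => g (u z)) x = g' (u x) * lapl u x + g'' (u x) * ‖fderiv ℝ u x‖ ^ 2 := by
  have hdiff := hu.differentiable two_ne_zero
  have hfderiv := hasFDerivAt_comp_of_nonneg hg' (hdiff x) (hu0 x)
  have hgrad := (contDiff_gradient (m := 1) hu (by norm_num)).differentiable one_ne_zero x
  rw [lapl_eq_diverg_gradient, gradient_comp_of_nonneg hg hdiff hu0,
    diverg_smul hfderiv.differentiableAt hgrad, hfderiv.fderiv, lapl_eq_diverg_gradient u]
  simp [fderiv_apply_gradient_self]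

end Composition

section EntropyIdentity

variable {d : ℕ} {σ : ℝ} {b : ℝ^d → ℝ^d} {φ u : ℝ^d → ℝ} {β β' β'' : ℝ → ℝ}

/-- The right-hand side `σ Δu - div (u b)` of the drift–diffusion (Fokker–Planck) equation with
diffusivity `σ` and drift `b`. -/
def driftDiffusion (σ : ℝ) (b : ℝ^d → ℝ^d) (u : ℝ^d → ℝ) (x : ℝ^d) : ℝ :=
  σ * lapl u x - diverg (u • b) x

theorem deriv_comp_mul_driftDiffusion (hβ : ∀ y, 0 ≤ y → HasDerivAt β (β' y) y)
    (hβ' : ∀ y, 0 ≤ y → HasDerivAt β' (β'' y) y) (hu : ContDiff ℝ 2 u) (hu0 : ∀ x, 0 ≤ u x)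
    (hb : Differentiable ℝ b) (x : ℝ^d) :
    β' (u x) * driftDiffusion σ b u x = driftDiffusion σ b (fun z => β (u z)) x -
      σ * (β'' (u x) * ‖fderiv ℝ u x‖ ^ 2) - (β' (u x) * u x - β (u x)) * diverg b x := by
  have hdiff := hu.differentiable two_ne_zero x
  have hfderiv := hasFDerivAt_comp_of_nonneg hβ hdiff (hu0 x)
  rw [driftDiffusion, driftDiffusion, diverg_smul hdiff (hb x),
    diverg_smul hfderiv.differentiableAt (hb x), hfderiv.fderiv, lapl_comp_of_nonneg hβ hβ' hu hu0]
  simp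
  ring

theorem integral_mul_diverg (hφ : ContDiff ℝ 1 φ) (hφs : HasCompactSupport φ)
    (hb : ContDiff ℝ 1 b) : ∫ x, φ x * diverg b x = -∫ x, fderiv ℝ φ x (b x) := by
  have hpoint : ∀ x, diverg (φ • b) x = φ x * diverg b x + fderiv ℝ φ x (b x) := fun x =>
    diverg_smul (hφ.differentiable one_ne_zero x) (hb.differentiable one_ne_zero x)
  have hint : Integrable fun x => φ x * diverg b x :=
    (hφ.continuous.mul (contDiff_diverg (m := 0) hb (by norm_num)).continuous)
      |>.integrable_of_hasCompactSupport hφs.mul_right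
  have hint' : Integrable fun x => fderiv ℝ φ x (b x) :=
    ((hφ.continuous_fderiv one_ne_zero).clm_apply hb.continuous).integrable_of_hasCompactSupport
      ((hφs.fderiv ℝ).mono fun x hx h0 => hx (by simp [h0]))
  rw [eq_neg_iff_add_eq_zero, ← integral_add hint hint', ← integral_diverg_eq_zero
    (hφ.smul hb) (hφs.smul_right (f' := b))]
  exact integral_congr_ae (.of_forall fun x => (hpoint x).symm)

theorem integral_mul_driftDiffusion (hφ : ContDiff ℝ 2 φ) (hφs : HasCompactSupport φ)
    (hu : ContDiff ℝ 2 u) (hb : ContDiff ℝ 1 b) :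
    ∫ x, φ x * driftDiffusion σ b u x =
      ∫ x, u x * (σ * lapl φ x + fderiv ℝ φ x (b x)) := by
  have hub : ContDiff ℝ 1 (u • b) := (hu.of_le one_le_two).smul hb
  have hint : Integrable fun x => φ x * lapl u x :=
    (hφ.continuous.mul (contDiff_lapl (m := 0) hu (by norm_num)).continuous)
      |>.integrable_of_hasCompactSupport hφs.mul_right
  have hint₁ : Integrable fun x => φ x * diverg (u • b) x :=
    (hφ.continuous.mul (contDiff_diverg (m := 0) hub (by norm_num)).continuous)
      |>.integrable_of_hasCompactSupport hφs.mul_right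
  have hint₂ : Integrable fun x => lapl φ x * u x :=
    ((contDiff_lapl (m := 0) hφ (by norm_num)).continuous.mul hu.continuous)
      |>.integrable_of_hasCompactSupport (hasCompactSupport_lapl hφs).mul_right
  have hint₃ : Integrable fun x => fderiv ℝ φ x ((u • b) x) :=
    ((hφ.continuous_fderiv two_ne_zero).clm_apply hub.continuous).integrable_of_hasCompactSupport
      ((hφs.fderiv ℝ).mono fun x hx h0 => hx (by simp [h0]))
  calc ∫ x, φ x * driftDiffusion σ b u x
      = ∫ x, (σ * (φ x * lapl u x) - φ x * diverg (u • b) x) := by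
        simp only [driftDiffusion, mul_sub, mul_left_comm]
    _ = σ * (∫ x, lapl φ x * u x) + ∫ x, fderiv ℝ φ x ((u • b) x) := by
        rw [integral_sub (hint.const_mul σ) hint₁, integral_const_mul,
          integral_mul_lapl_comm hφ hu hφs, integral_mul_diverg (hφ.of_le one_le_two) hφs hub,
          sub_neg_eq_add]
    _ = ∫ x, u x * (σ * lapl φ x + fderiv ℝ φ x (b x)) := by
        rw [← integral_const_mul, ← integral_add (hint₂.const_mul σ) hint₃]
        congr with x
        simp
        ring

theorem integral_mul_deriv_comp_mul_driftDiffusion (hβ : ∀ y, 0 ≤ y → HasDerivAt β (β' y) y)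
    (hβ' : ∀ y, 0 ≤ y → HasDerivAt β' (β'' y) y) (hβ'' : ContinuousOn β'' (Ici 0))
    (hu : ContDiff ℝ 2 u) (hu0 : ∀ x, 0 ≤ u x) (hφ : ContDiff ℝ 2 φ) (hφs : HasCompactSupport φ)
    (hb : ContDiff ℝ 1 b) :
    ∫ x, φ x * (β' (u x) * driftDiffusion σ b u x) =
      (∫ x, β (u x) * (σ * lapl φ x + fderiv ℝ φ x (b x))) -
      σ * (∫ x, φ x * (β'' (u x) * ‖fderiv ℝ u x‖ ^ 2)) -
      ∫ x, φ x * ((β' (u x) * u x - β (u x)) * diverg b x) := by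
  have hβu : ContDiff ℝ 2 fun x => β (u x) := contDiff_two_comp_of_nonneg hβ hβ' hβ'' hu hu0
  have hβ'u : Continuous fun x => β' (u x) :=
    ContinuousOn.comp_continuous (fun y hy => (hβ' y hy).continuousAt.continuousWithinAt)
      hu.continuous hu0
  have hβ''u : Continuous fun x => β'' (u x) := hβ''.comp_continuous hu.continuous hu0
  have hDu := hu.continuous_fderiv two_ne_zero
  have hdivb := (contDiff_diverg (m := 0) hb (by norm_num)).continuous
  have hflux : Continuous (driftDiffusion σ b fun x => β (u x)) :=
    ((contDiff_lapl (m := 0) hβu (by norm_num)).continuous.const_mul σ).sub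
      (contDiff_diverg (m := 0) ((hβu.of_le one_le_two).smul hb) (by norm_num)).continuous
  have hint : ∀ {f : ℝ^d → ℝ}, Continuous f → Integrable fun x => φ x * f x := fun hf =>
    (hφ.continuous.mul hf).integrable_of_hasCompactSupport hφs.mul_right
  have hint₂ : Integrable fun x => φ x * (σ * (β'' (u x) * ‖fderiv ℝ u x‖ ^ 2)) :=
    hint ((hβ''u.mul (hDu.norm.pow 2)).const_mul σ)
  have hint₃ : Integrable fun x => φ x * ((β' (u x) * u x - β (u x)) * diverg b x) :=
    hint ((hβ'u.mul hu.continuous).sub hβu.continuous |>.mul hdivb)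
  have hint₁₂ : Integrable fun x => φ x * driftDiffusion σ b (fun z => β (u z)) x -
      φ x * (σ * (β'' (u x) * ‖fderiv ℝ u x‖ ^ 2)) := (hint hflux).sub hint₂
  simp only [deriv_comp_mul_driftDiffusion hβ hβ' hu hu0 (hb.differentiable one_ne_zero), mul_sub]
  rw [integral_sub hint₁₂ hint₃, integral_sub (hint hflux) hint₂,
    integral_mul_driftDiffusion hφ hφs hβu hb]
  simp only [mul_left_comm _ σ, integral_const_mul]

end EntropyIdentity

section Cutoff

variable {d : ℕ}

/-- A spatial cutoff with values in `[0, 1]`. The parameter `e` bounds the derivatives that are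
integrated against the entropy, which are those of `ψ` and of `ψ ^ 2`. -/
structure IsCutoff (e : ℝ) (ψ : ℝ^d → ℝ) : Prop where
  contDiff : ContDiff ℝ 2 ψ
  hasCompactSupport : HasCompactSupport ψ
  nonneg : ∀ x, 0 ≤ ψ x
  le_one : ∀ x, ψ x ≤ 1
  norm_fderiv_le : ∀ x, ‖fderiv ℝ ψ x‖ ≤ e
  norm_fderiv_sq_le : ∀ x, ‖fderiv ℝ (fun y => ψ y ^ 2) x‖ ≤ e
  abs_lapl_sq_le : ∀ x, |lapl (fun y => ψ y ^ 2) x| ≤ e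

theorem exists_pos_forall_norm_fderiv_comp_smul_le {f : ℝ^d → ℝ} (hf : ContDiff ℝ 2 f)
    (hs : HasCompactSupport f) {e : ℝ} (he : 0 < e) :
    ∃ c₀ > 0, ∀ c : ℝ, 0 < c → c ≤ c₀ → ∀ x,
      ‖fderiv ℝ (fun y => f (c • y)) x‖ ≤ e ∧ |lapl (fun y => f (c • y)) x| ≤ e := by
  obtain ⟨M₁, hM₁⟩ := (hs.fderiv ℝ).exists_bound_of_continuous (hf.continuous_fderiv two_ne_zero)
  obtain ⟨M₂, hM₂⟩ := (hasCompactSupport_lapl hs).exists_bound_of_continuous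
    (contDiff_lapl (m := 0) hf (by norm_num)).continuous
  have hM₁0 : 0 ≤ M₁ := (norm_nonneg _).trans (hM₁ 0)
  have hM₂0 : 0 ≤ M₂ := (norm_nonneg _).trans (hM₂ 0)
  refine ⟨min 1 (e / (M₁ + M₂ + 1)), by positivity, fun c hc hc₀ x => ?_⟩
  have hc1 : c ≤ 1 := hc₀.trans (min_le_left _ _)
  have hce : c * (M₁ + M₂ + 1) ≤ e := (le_div_iff₀ (by positivity)).1 (hc₀.trans (min_le_right _ _))
  constructor
  · calc ‖fderiv ℝ (fun y => f (c • y)) x‖ = c * ‖fderiv ℝ f (c • x)‖ := by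
          rw [fderiv_comp_smul, norm_smul, Real.norm_of_nonneg hc.le]
      _ ≤ c * (M₁ + M₂ + 1) := by gcongr; linarith [hM₁ (c • x)]
      _ ≤ e := hce
  · calc |lapl (fun y => f (c • y)) x| = c ^ 2 * ‖lapl f (c • x)‖ := by
          have h := lapl_comp_add_smul f 0 c x
          simp only [zero_add] at h
          rw [h, abs_mul, abs_of_pos (by positivity), Real.norm_eq_abs]
      _ ≤ c * (M₁ + M₂ + 1) := by
          gcongr
          · nlinarith
          · linarith [hM₂ (c • x)]
      _ ≤ e := hce

theorem exists_isCutoff_eq_one (d : ℕ) {e R : ℝ} (he : 0 < e) (hR : 0 < R) :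
    ∃ ψ : ℝ^d → ℝ, IsCutoff e ψ ∧ ∀ x, ‖x‖ ≤ R → ψ x = 1 := by
  let f : ContDiffBump (0 : ℝ^d) := ⟨1, 2, one_pos, one_lt_two⟩
  have hf : ContDiff ℝ 2 f := f.contDiff
  have hsq : HasCompactSupport fun x => f x ^ 2 :=
    f.hasCompactSupport.mono fun x hx h0 => hx (by simp [h0])
  obtain ⟨c₁, hc₁, hbound⟩ :=
    exists_pos_forall_norm_fderiv_comp_smul_le hf f.hasCompactSupport he
  obtain ⟨c₂, hc₂, hbound_sq⟩ :=
    exists_pos_forall_norm_fderiv_comp_smul_le (hf.pow 2) hsq he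
  set c := min (min c₁ c₂) R⁻¹
  have hc : 0 < c := by positivity
  have hcc₁ : c ≤ c₁ := (min_le_left _ _).trans (min_le_left _ _)
  have hcc₂ : c ≤ c₂ := (min_le_left _ _).trans (min_le_right _ _)
  refine ⟨fun x => f (c • x), ⟨hf.comp (contDiff_const_smul c),
    f.hasCompactSupport.comp_homeomorph (Homeomorph.smulOfNeZero c hc.ne'), fun _ => f.nonneg,
    fun _ => f.le_one, fun x => (hbound c hc hcc₁ x).1, fun x => (hbound_sq c hc hcc₂ x).1,
    fun x => (hbound_sq c hc hcc₂ x).2⟩, fun x hx => f.one_of_mem_closedBall ?_⟩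
  rw [mem_closedBall_zero_iff, norm_smul, Real.norm_of_nonneg hc.le]
  calc c * ‖x‖ ≤ R⁻¹ * R := by gcongr; exact min_le_right _ _
    _ = 1 := inv_mul_cancel₀ hR.ne'

namespace IsCutoff

variable {e : ℝ} {ψ : ℝ^d → ℝ}

theorem hasCompactSupport_sq (hψ : IsCutoff e ψ) : HasCompactSupport fun x => ψ x ^ 2 :=
  hψ.hasCompactSupport.mono fun x hx h0 => hx (by simp [h0])

theorem sq_le_one (hψ : IsCutoff e ψ) (x : ℝ^d) : ψ x ^ 2 ≤ 1 :=
  pow_le_one₀ (hψ.nonneg x) (hψ.le_one x)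

theorem bound_nonneg (hψ : IsCutoff e ψ) : 0 ≤ e :=
  (norm_nonneg _).trans (hψ.norm_fderiv_le 0)

end IsCutoff

end Cutoff

section EntropyInequality

variable {d : ℕ} {q K e σ B : ℝ} {θ θ' θ'' : ℝ → ℝ} {ψ u : ℝ^d → ℝ} {b : ℝ^d → ℝ^d}

namespace IsEntropyWeight

theorem continuous_entropy_comp (hθ : IsEntropyWeight q K θ θ' θ'') (hu : Continuous u)
    (hu0 : ∀ x, 0 ≤ u x) : Continuous fun x => u x * θ (u x) :=
  ContinuousOn.comp_continuous (g := fun y => y * θ y)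
    (fun _ hy => (hθ.hasDerivAt_entropy hy).continuousAt.continuousWithinAt) hu hu0

theorem integrable_entropy_comp (hθ : IsEntropyWeight q K θ θ' θ'') (hu : Continuous u)
    (hu0 : ∀ x, 0 ≤ u x) (hui : Integrable u) : Integrable fun x => u x * θ (u x) :=
  (hui.const_mul K).mono' (hθ.continuous_entropy_comp hu hu0).aestronglyMeasurable <|
    .of_forall fun x => by
      rw [Real.norm_of_nonneg (hθ.entropy_nonneg (hu0 x))]
      exact hθ.entropy_le (hu0 x)

theorem integral_entropy_mul_cutoff_le (hθ : IsEntropyWeight q K θ θ' θ'') (hψ : IsCutoff e ψ)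
    (hσ : 0 ≤ σ) (hu : Continuous u) (hu0 : ∀ x, 0 ≤ u x) (hui : Integrable u)
    (hb : Continuous b) (hB : ∀ x, ‖b x‖ ≤ B) :
    ∫ x, u x * θ (u x) * (σ * lapl (fun y => ψ y ^ 2) x + fderiv ℝ (fun y => ψ y ^ 2) x (b x)) ≤
      K * (σ + B) * e * ∫ x, u x := by
  have hφ : ContDiff ℝ 2 fun x => ψ x ^ 2 := hψ.contDiff.pow 2
  have hbound : ∀ x, ‖σ * lapl (fun y => ψ y ^ 2) x + fderiv ℝ (fun y => ψ y ^ 2) x (b x)‖ ≤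
      (σ + B) * e := fun x => by
    calc _ ≤ ‖σ * lapl (fun y => ψ y ^ 2) x‖ + ‖fderiv ℝ (fun y => ψ y ^ 2) x (b x)‖ :=
          norm_add_le _ _
      _ ≤ σ * e + e * B := by
          rw [norm_mul, Real.norm_of_nonneg hσ]
          gcongr
          · exact hψ.abs_lapl_sq_le x
          · exact (ContinuousLinearMap.le_opNorm _ _).trans <|
              mul_le_mul (hψ.norm_fderiv_sq_le x) (hB x) (norm_nonneg _) hψ.bound_nonneg
      _ = (σ + B) * e := by ring
  have hcont : Continuous fun x =>
      σ * lapl (fun y => ψ y ^ 2) x + fderiv ℝ (fun y => ψ y ^ 2) x (b x) :=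
    ((contDiff_lapl (m := 0) hφ (by norm_num)).continuous.const_mul σ).add
      ((hφ.continuous_fderiv two_ne_zero).clm_apply hb)
  rw [← integral_const_mul]
  refine integral_mono ((hθ.integrable_entropy_comp hu hu0 hui).mul_bdd
    hcont.aestronglyMeasurable (.of_forall hbound)) (hui.const_mul _) fun x => ?_
  calc _ ≤ u x * θ (u x) * ((σ + B) * e) :=
        mul_le_mul_of_nonneg_left ((le_abs_self _).trans (hbound x)) (hθ.entropy_nonneg (hu0 x))
    _ ≤ K * u x * ((σ + B) * e) :=
        mul_le_mul_of_nonneg_right (hθ.entropy_le (hu0 x)) ((norm_nonneg _).trans (hbound x))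
    _ = K * (σ + B) * e * u x := by ring

end IsEntropyWeight

/-- The Fisher-type dissipation `∫ ψ² β''(u) |∇u|²` of the entropy density `β(y) = y θ(y)`,
for which `β'' = 2 θ' + y θ''`. -/
def entropyDissipation (θ' θ'' : ℝ → ℝ) (ψ u : ℝ^d → ℝ) : ℝ :=
  ∫ x, ψ x ^ 2 * ((2 * θ' (u x) + u x * θ'' (u x)) * ‖fderiv ℝ u x‖ ^ 2)

theorem entropyDissipation_nonneg (hθ : IsEntropyWeight q K θ θ' θ'') (hu0 : ∀ x, 0 ≤ u x) :
    0 ≤ entropyDissipation θ' θ'' ψ u :=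
  integral_nonneg fun x =>
    mul_nonneg (sq_nonneg _) (mul_nonneg (hθ.convex _ (hu0 x)) (sq_nonneg _))

theorem integral_entropy_driftDiffusion_le (hθ : IsEntropyWeight q K θ θ' θ'')
    (hψ : IsCutoff e ψ) (hσ : 0 ≤ σ) (hu : ContDiff ℝ 2 u) (hu0 : ∀ x, 0 ≤ u x)
    (hui : Integrable u) (hb : ContDiff ℝ 1 b) (hB : ∀ x, ‖b x‖ ≤ B) :
    ∫ x, ψ x ^ 2 * ((θ (u x) + u x * θ' (u x)) * driftDiffusion σ b u x) ≤
      K * (σ + B) * e * (∫ x, u x) - σ * entropyDissipation θ' θ'' ψ u +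
        ∫ x, (ψ x * (u x * √(θ' (u x)))) ^ 2 * |diverg b x| := by
  have hreaction : -∫ x, ψ x ^ 2 *
      (((θ (u x) + u x * θ' (u x)) * u x - u x * θ (u x)) * diverg b x) ≤
      ∫ x, (ψ x * (u x * √(θ' (u x)))) ^ 2 * |diverg b x| := by
    refine (neg_le_abs _).trans <| (abs_integral_le_integral_abs).trans_eq <|
      integral_congr_ae (.of_forall fun x => ?_)
    have hsq : (θ (u x) + u x * θ' (u x)) * u x - u x * θ (u x) = (u x * √(θ' (u x))) ^ 2 := by
      rw [hθ.sq_mul_sqrt_deriv (hu0 x)]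
      ring
    simp only [hsq, abs_mul, abs_sq, mul_pow]
    ring
  have herror := hθ.integral_entropy_mul_cutoff_le hψ hσ hu.continuous hu0 hui hb.continuous hB
  rw [integral_mul_deriv_comp_mul_driftDiffusion (fun _ => hθ.hasDerivAt_entropy)
    (fun _ => hθ.hasDerivAt_deriv_entropy) hθ.continuousOn_deriv_deriv_entropy hu hu0
    (hψ.contDiff.pow 2) hψ.hasCompactSupport_sq hb, ← entropyDissipation]
  linarith

theorem integral_entropy_driftDiffusion_le_of_abs_diverg_le {L : ℝ}
    (hθ : IsEntropyWeight q K θ θ' θ'') (hψ : IsCutoff e ψ) (hσ : 0 ≤ σ) (hu : ContDiff ℝ 2 u)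
    (hu0 : ∀ x, 0 ≤ u x) (hui : Integrable u) (hb : ContDiff ℝ 1 b) (hB : ∀ x, ‖b x‖ ≤ B)
    (hL : ∀ x, |diverg b x| ≤ L) :
    ∫ x, ψ x ^ 2 * ((θ (u x) + u x * θ' (u x)) * driftDiffusion σ b u x) ≤
      K * (σ + B) * e * (∫ x, u x) + q * L * ∫ x, ψ x ^ 2 * (u x * θ (u x)) := by
  have hreaction : ∫ x, (ψ x * (u x * √(θ' (u x)))) ^ 2 * |diverg b x| ≤
      q * L * ∫ x, ψ x ^ 2 * (u x * θ (u x)) := by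
    rw [← integral_const_mul]
    refine integral_mono_of_nonneg (.of_forall fun x => by positivity)
      (Integrable.const_mul ?_ _) (.of_forall fun x => ?_)
    · exact ((hψ.contDiff.continuous.pow 2).mul (hθ.continuous_entropy_comp hu.continuous hu0))
        |>.integrable_of_hasCompactSupport hψ.hasCompactSupport_sq.mul_right
    · have hsq := hθ.sq_mul_sqrt_deriv_le (hu0 x)
      calc (ψ x * (u x * √(θ' (u x)))) ^ 2 * |diverg b x|
          ≤ ψ x ^ 2 * (q * (u x * θ (u x))) * L := by
            rw [mul_pow]
            have := (sq_nonneg _).trans hsq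
            gcongr
            exact hL x
        _ = q * L * (ψ x ^ 2 * (u x * θ (u x))) := by ring
  have hdissipation := mul_nonneg hσ (entropyDissipation_nonneg (ψ := ψ) hθ hu0)
  linarith [integral_entropy_driftDiffusion_le hθ hψ hσ hu hu0 hui hb hB]

theorem sq_norm_fderiv_cutoff_mul_le (hθ : IsEntropyWeight q K θ θ' θ'') (hψ : IsCutoff e ψ)
    (hq : 0 ≤ q) (hu : Differentiable ℝ u) (hu0 : ∀ x, 0 ≤ u x) (x : ℝ^d) :
    ‖fderiv ℝ (fun z => ψ z * (u z * √(θ' (u z)))) x‖ ^ 2 ≤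
      (2 + q) / 2 * (ψ x ^ 2 * ((2 * θ' (u x) + u x * θ'' (u x)) * ‖fderiv ℝ u x‖ ^ 2)) +
        2 * q * K * e ^ 2 * u x := by
  have hm := hasFDerivAt_comp_of_nonneg (fun _ => hθ.hasDerivAt_mul_sqrt_deriv) (hu x) (hu0 x)
  have hψx := (hψ.contDiff.differentiable two_ne_zero x).hasFDerivAt
  rw [(hψx.fun_mul hm).fderiv]
  set m := u x * √(θ' (u x))
  set m' := (2 * θ' (u x) + u x * θ'' (u x)) / (2 * √(θ' (u x)))
  have hm_sq : m ^ 2 ≤ q * (K * u x) := (hθ.sq_mul_sqrt_deriv_le (hu0 x)).trans <|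
    mul_le_mul_of_nonneg_left (hθ.entropy_le (hu0 x)) hq
  have hm'_sq : m' ^ 2 ≤ (2 + q) / 4 * (2 * θ' (u x) + u x * θ'' (u x)) :=
    hθ.sq_deriv_mul_sqrt_deriv_le (hu0 x)
  have hmass : 0 ≤ q * (K * u x) := (sq_nonneg m).trans hm_sq
  calc ‖ψ x • m' • fderiv ℝ u x + m • fderiv ℝ ψ x‖ ^ 2
      ≤ (‖ψ x • m' • fderiv ℝ u x‖ + ‖m • fderiv ℝ ψ x‖) ^ 2 := by gcongr; exact norm_add_le _ _
    _ ≤ 2 * (‖ψ x • m' • fderiv ℝ u x‖ ^ 2 + ‖m • fderiv ℝ ψ x‖ ^ 2) := add_sq_le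
    _ = 2 * (ψ x ^ 2 * (m' ^ 2 * ‖fderiv ℝ u x‖ ^ 2) + m ^ 2 * ‖fderiv ℝ ψ x‖ ^ 2) := by
        simp only [norm_smul, mul_pow, Real.norm_eq_abs, sq_abs]
    _ ≤ 2 * (ψ x ^ 2 * ((2 + q) / 4 * (2 * θ' (u x) + u x * θ'' (u x)) * ‖fderiv ℝ u x‖ ^ 2) +
          q * (K * u x) * e ^ 2) := by
        gcongr
        exact hψ.norm_fderiv_le x
    _ = _ := by ring

theorem integral_sq_norm_fderiv_cutoff_mul_le (hθ : IsEntropyWeight q K θ θ' θ'')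
    (hψ : IsCutoff e ψ) (hq : 0 ≤ q) (hu : ContDiff ℝ 1 u) (hu0 : ∀ x, 0 ≤ u x)
    (hui : Integrable u) :
    ∫ x, ‖fderiv ℝ (fun z => ψ z * (u z * √(θ' (u z)))) x‖ ^ 2 ≤
      (2 + q) / 2 * entropyDissipation θ' θ'' ψ u + 2 * q * K * e ^ 2 * ∫ x, u x := by
  have hint : Integrable fun x =>
      ψ x ^ 2 * ((2 * θ' (u x) + u x * θ'' (u x)) * ‖fderiv ℝ u x‖ ^ 2) :=
    ((hψ.contDiff.continuous.pow 2).mul ((hθ.continuousOn_deriv_deriv_entropy.comp_continuous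
      hu.continuous hu0).mul ((hu.continuous_fderiv one_ne_zero).norm.pow 2)))
      |>.integrable_of_hasCompactSupport hψ.hasCompactSupport_sq.mul_right
  rw [entropyDissipation, ← integral_const_mul, ← integral_const_mul,
    ← integral_add (hint.const_mul _) (hui.const_mul _)]
  exact integral_mono_of_nonneg (.of_forall fun x => sq_nonneg _)
    ((hint.const_mul _).add (hui.const_mul _))
    (.of_forall (sq_norm_fderiv_cutoff_mul_le hθ hψ hq (hu.differentiable one_ne_zero) hu0))

theorem integral_entropy_driftDiffusion_le_of_isFormBounded {c : ℝ}
    (hθ : IsEntropyWeight q K θ θ' θ'') (hψ : IsCutoff e ψ) (hq : 0 ≤ q) (hσ : 0 ≤ σ)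
    (hu : ContDiff ℝ 2 u) (hu0 : ∀ x, 0 ≤ u x) (hui : Integrable u) (hb : ContDiff ℝ 1 b)
    (hB : ∀ x, ‖b x‖ ≤ B) (hc : 0 ≤ c) (hform : IsFormBounded (ENNReal.ofReal c) (diverg b))
    (hcσ : c * ((2 + q) / 2) ≤ σ) :
    ∫ x, ψ x ^ 2 * ((θ (u x) + u x * θ' (u x)) * driftDiffusion σ b u x) ≤
      K * (σ + B) * e * (∫ x, u x) + c * (2 * q * K * e ^ 2 * ∫ x, u x) := by
  have hu1 : ContDiff ℝ 1 u := hu.of_le one_le_two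
  have hv : ContDiff ℝ 1 fun x => ψ x * (u x * √(θ' (u x))) :=
    (hψ.contDiff.of_le one_le_two).mul <| contDiff_one_comp_of_nonneg
      (fun _ => hθ.hasDerivAt_mul_sqrt_deriv) hθ.continuousOn_deriv_mul_sqrt_deriv hu1 hu0
  calc _ ≤ K * (σ + B) * e * (∫ x, u x) - σ * entropyDissipation θ' θ'' ψ u +
        ∫ x, (ψ x * (u x * √(θ' (u x)))) ^ 2 * |diverg b x| :=
        integral_entropy_driftDiffusion_le hθ hψ hσ hu hu0 hui hb hB
    _ ≤ K * (σ + B) * e * (∫ x, u x) - c * ((2 + q) / 2) * entropyDissipation θ' θ'' ψ u +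
        c * ((2 + q) / 2 * entropyDissipation θ' θ'' ψ u + 2 * q * K * e ^ 2 * ∫ x, u x) := by
        have hdissipation := entropyDissipation_nonneg (ψ := ψ) hθ hu0
        gcongr
        exact (hform.integral_sq_mul_abs_le hc
          (contDiff_diverg (m := 0) hb (by norm_num)).continuous hv
          hψ.hasCompactSupport.mul_right).trans <| mul_le_mul_of_nonneg_left
            (integral_sq_norm_fderiv_cutoff_mul_le hθ hψ hq hu1 hu0 hui) hc
    _ = _ := by ring

/-- Along `∂ₜu = σ Δu - div (u b)` every entropy with exponent `q` grows at rate at most `c`, up to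
an error proportional to the cutoff parameter `e`. -/
def HasEntropyGrowthRate (σ q c M : ℝ) (b : ℝ^d → ℝ^d) (u : ℝ^d → ℝ) : Prop :=
  ∀ ⦃K e : ℝ⦄ ⦃θ θ' θ'' : ℝ → ℝ⦄ ⦃ψ : ℝ^d → ℝ⦄, IsEntropyWeight q K θ θ' θ'' → IsCutoff e ψ →
    e ≤ 1 → ∫ x, ψ x ^ 2 * ((θ (u x) + u x * θ' (u x)) * driftDiffusion σ b u x) ≤
      K * M * e + c * ∫ x, ψ x ^ 2 * (u x * θ (u x))

theorem hasEntropyGrowthRate_of_abs_diverg_le {L : ℝ} (hσ : 0 ≤ σ) (hu : ContDiff ℝ 2 u)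
    (hu0 : ∀ x, 0 ≤ u x) (hui : Integrable u) (hu1 : ∫ x, u x = 1) (hb : ContDiff ℝ 1 b)
    (hB : ∀ x, ‖b x‖ ≤ B) (hL : ∀ x, |diverg b x| ≤ L) :
    HasEntropyGrowthRate σ q (q * L) (σ + B) b u := fun K e θ θ' θ'' ψ hθ hψ _ => by
  simpa [hu1] using
    integral_entropy_driftDiffusion_le_of_abs_diverg_le hθ hψ hσ hu hu0 hui hb hB hL

theorem hasEntropyGrowthRate_zero_of_isFormBounded {c : ℝ} (hq : 0 ≤ q) (hσ : 0 ≤ σ)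
    (hu : ContDiff ℝ 2 u) (hu0 : ∀ x, 0 ≤ u x) (hui : Integrable u) (hu1 : ∫ x, u x = 1)
    (hb : ContDiff ℝ 1 b) (hB : ∀ x, ‖b x‖ ≤ B) (hc : 0 ≤ c)
    (hform : IsFormBounded (ENNReal.ofReal c) (diverg b)) (hcσ : c * ((2 + q) / 2) ≤ σ) :
    HasEntropyGrowthRate σ q 0 (σ + B + 2 * c * q) b u := fun K e θ θ' θ'' ψ hθ hψ he => by
  have hK := hθ.bound_nonneg
  have he0 := hψ.bound_nonneg
  calc _ ≤ K * (σ + B) * e * (∫ x, u x) + c * (2 * q * K * e ^ 2 * ∫ x, u x) :=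
        integral_entropy_driftDiffusion_le_of_isFormBounded hθ hψ hq hσ hu hu0 hui hb hB hc hform
          hcσ
    _ = K * (σ + B) * e + 2 * c * q * K * (e * e) := by rw [hu1]; ring
    _ ≤ K * (σ + B) * e + 2 * c * q * K * (e * 1) := by gcongr
    _ = _ := by ring

end EntropyInequality

section TimeDerivative

variable {E : Type*} [NormedAddCommGroup E] {a T : ℝ}

theorem continuousOn_of_hasDerivWithinAt [NormedSpace ℝ E] {w R : ℝ → E → ℝ} (haT : a < T)
    (hw : ContDiffOn ℝ 1 (fun p : ℝ × E => w p.1 p.2) (Icc a T ×ˢ univ))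
    (hR : ∀ t ∈ Icc a T, ∀ x, HasDerivWithinAt (fun s => w s x) (R t x) (Icc a T) t) :
    ContinuousOn (fun p : ℝ × E => R p.1 p.2) (Icc a T ×ˢ univ) := by
  have hunique : UniqueDiffOn ℝ (Icc a T ×ˢ (univ : Set E)) :=
    (uniqueDiffOn_Icc haT).prod uniqueDiffOn_univ
  refine ((hw.continuousOn_fderivWithin hunique le_rfl).clm_apply
    (continuousOn_const (c := ((1 : ℝ), (0 : E))))).congr fun ⟨t, x⟩ ⟨ht, _⟩ => ?_
  have hline : HasDerivWithinAt (fun s : ℝ => (s, x)) ((1 : ℝ), (0 : E)) (Icc a T) t :=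
    (hasDerivWithinAt_id t _).prodMk (hasDerivWithinAt_const t _ x)
  have hmaps : MapsTo (fun s : ℝ => (s, x)) (Icc a T) (Icc a T ×ˢ univ) :=
    fun s hs => ⟨hs, mem_univ x⟩
  have hchain := (hw.differentiableOn one_ne_zero (t, x)
    ⟨ht, mem_univ x⟩).hasFDerivWithinAt.comp_hasDerivWithinAt t hline hmaps
  exact (uniqueDiffOn_Icc haT t ht).eq_deriv _ (hR t ht x) hchain

variable [MeasurableSpace E] [BorelSpace E] {μ : Measure E} [IsFiniteMeasureOnCompacts μ]
  {φ : E → ℝ} {g g' : ℝ → E → ℝ}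

theorem continuousOn_integral_mul (hφ : Continuous φ) (hφs : HasCompactSupport φ)
    (hg : ContinuousOn (fun p : ℝ × E => g p.1 p.2) (Icc a T ×ˢ univ)) :
    ContinuousOn (fun t => ∫ x, φ x * g t x ∂μ) (Icc a T) :=
  continuousOn_integral_of_compact_support hφs
    ((hφ.comp continuous_snd).continuousOn.mul hg) fun t x _ hx => by
      simp [image_eq_zero_of_notMem_tsupport hx]

theorem hasDerivAt_integral_mul (hφ : Continuous φ) (hφs : HasCompactSupport φ)
    (hg : ContinuousOn (fun p : ℝ × E => g p.1 p.2) (Icc a T ×ˢ univ))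
    (hg' : ContinuousOn (fun p : ℝ × E => g' p.1 p.2) (Icc a T ×ˢ univ))
    (hderiv : ∀ t ∈ Ioo a T, ∀ x, HasDerivAt (fun s => g s x) (g' t x) t) {t : ℝ}
    (ht : t ∈ Ioo a T) :
    HasDerivAt (fun t => ∫ x, φ x * g t x ∂μ) (∫ x, φ x * g' t x ∂μ) t := by
  have hslice : ∀ {f : ℝ × E → ℝ}, ContinuousOn f (Icc a T ×ˢ univ) → ∀ s ∈ Icc a T,
      Continuous fun x => f (s, x) := fun hf s hs =>
    hf.comp_continuous (by fun_prop) fun x => ⟨hs, mem_univ x⟩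
  have htI := Ioo_subset_Icc_self ht
  obtain ⟨M, hM⟩ := (isCompact_Icc.prod hφs).exists_bound_of_continuousOn
    (hg'.mono (prod_mono_right (subset_univ _)))
  refine (hasDerivAt_integral_of_dominated_loc_of_deriv_le (bound := fun x => |φ x| * M)
    (Ioo_mem_nhds ht.1 ht.2) ?_ ?_ ?_ (.of_forall fun x s hs => ?_) ?_
    (.of_forall fun x s hs => (hderiv s hs x).const_mul (φ x))).2
  · filter_upwards [Icc_mem_nhds ht.1 ht.2] with s hs
    exact (hφ.mul (hslice hg s hs)).aestronglyMeasurable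
  · exact (hφ.mul (hslice hg t htI)).integrable_of_hasCompactSupport hφs.mul_right
  · exact (hφ.mul (hslice hg' t htI)).aestronglyMeasurable
  · rw [norm_mul, Real.norm_eq_abs]
    by_cases hx : x ∈ tsupport φ
    · gcongr
      exact hM (s, x) ⟨Ioo_subset_Icc_self hs, hx⟩
    · simp [image_eq_zero_of_notMem_tsupport hx]
  · exact (hφ.integrable_of_hasCompactSupport hφs).abs.mul_const M

end TimeDerivative

section Gronwall

theorem le_exp_mul_of_deriv_le {f f' : ℝ → ℝ} {s t a c : ℝ} (hst : s ≤ t) (ha : 0 ≤ a)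
    (hc : 0 ≤ c) (hf : ContinuousOn f (Icc s t)) (hf' : ∀ τ ∈ Ioo s t, HasDerivAt f (f' τ) τ)
    (hle : ∀ τ ∈ Ioo s t, f' τ ≤ a + c * f τ) :
    f t ≤ Real.exp (c * (t - s)) * (f s + a * (t - s)) := by
  let G : ℝ → ℝ := fun τ => Real.exp (-(c * (τ - s))) * f τ - a * (τ - s)
  have hG : AntitoneOn G (Icc s t) := by
    have hderiv : ∀ τ ∈ Ioo s t, HasDerivAt G (Real.exp (-(c * (τ - s))) * -(c * 1) * f τ +
        Real.exp (-(c * (τ - s))) * f' τ - a * 1) τ := fun τ hτ => by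
      have hsub : HasDerivAt (fun τ : ℝ => τ - s) 1 τ := (hasDerivAt_id τ).sub_const s
      exact ((hsub.const_mul c).fun_neg.exp.fun_mul (hf' τ hτ)).fun_sub (hsub.const_mul a)
    refine antitoneOn_of_deriv_nonpos (convex_Icc s t)
      ((ContinuousOn.mul (by fun_prop) hf).sub (by fun_prop)) ?_ ?_ <;> rw [interior_Icc]
    · exact fun τ hτ => (hderiv τ hτ).differentiableAt.differentiableWithinAt
    · intro τ hτ
      have hexp : Real.exp (-(c * (τ - s))) ≤ 1 :=
        Real.exp_le_one_iff.2 (neg_nonpos.2 (mul_nonneg hc (sub_nonneg.2 hτ.1.le)))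
      rw [(hderiv τ hτ).deriv]
      nlinarith [mul_le_mul_of_nonneg_left (hle τ hτ) (Real.exp_pos (-(c * (τ - s)))).le]
  have hGle : Real.exp (-(c * (t - s))) * f t ≤ f s + a * (t - s) := by
    have := hG (left_mem_Icc.2 hst) (right_mem_Icc.2 hst) hst
    simp only [G, sub_self, mul_zero, neg_zero, Real.exp_zero, one_mul, sub_zero] at this
    linarith
  rwa [Real.exp_neg, inv_mul_le_iff₀ (Real.exp_pos _)] at hGle

/-- On a time step of length at most `(log 2) / (c + 1)` the growth bound costs at most a factor
`2`, so the bound `F ≤ 2 F(0)` propagates from step to step. -/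
theorem le_initial_of_le_exp_mul {F : ℝ → ℝ} {T c : ℝ} (hc : 0 ≤ c) (hF0 : 0 ≤ F 0)
    (hgrowth : ∀ s t, 0 ≤ s → s ≤ t → t ≤ T → F t ≤ Real.exp (c * (t - s)) * F s)
    (hdecay : ∀ t ∈ Icc 0 T, (∀ τ ∈ Icc 0 t, F τ ≤ 2 * F 0) → F t ≤ F 0) :
    ∀ t ∈ Icc 0 T, F t ≤ F 0 := by
  set δ := Real.log 2 / (c + 1) with hδ
  have hlog : 0 < Real.log 2 := Real.log_pos one_lt_two
  have hδ0 : 0 < δ := by positivity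
  have hcδ : c * δ ≤ Real.log 2 := by
    rw [hδ, mul_div_assoc', div_le_iff₀ (by positivity)]
    nlinarith
  have hstep : ∀ n : ℕ, ∀ t ∈ Icc 0 T, t ≤ n * δ → F t ≤ F 0 := by
    intro n
    induction n with
    | zero =>
      intro t ht htn
      rw [le_antisymm (by simpa using htn) ht.1]
    | succ n ih =>
      intro t ht htn
      push_cast at htn
      refine hdecay t ht fun τ hτ => ?_
      rcases le_total τ (n * δ) with hτn | hnτ
      · linarith [ih τ ⟨hτ.1, hτ.2.trans ht.2⟩ hτn]
      have hnδ : 0 ≤ n * δ := by positivity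
      have hexp : Real.exp (c * (τ - n * δ)) ≤ 2 := by
        rw [← Real.le_log_iff_exp_le two_pos]
        exact (mul_le_mul_of_nonneg_left (by linarith [hτ.2]) hc).trans hcδ
      calc F τ ≤ Real.exp (c * (τ - n * δ)) * F (n * δ) :=
            hgrowth _ τ hnδ hnτ (hτ.2.trans ht.2)
        _ ≤ Real.exp (c * (τ - n * δ)) * F 0 := by
            gcongr
            exact ih _ ⟨hnδ, hnτ.trans (hτ.2.trans ht.2)⟩ le_rfl
        _ ≤ 2 * F 0 := by gcongr
  intro t ht
  obtain ⟨n, hn⟩ := exists_nat_ge (t / δ)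
  exact hstep n t ht ((div_le_iff₀ hδ0).1 hn)

end Gronwall

section Limits

variable {d : ℕ} {q : ℝ} {u : ℝ^d → ℝ}

theorem tendsto_integral_sq_cutoff_mul {e : ℕ → ℝ} {ψ : ℕ → ℝ^d → ℝ}
    (hψ : ∀ n, IsCutoff (e n) (ψ n)) (hψ1 : ∀ (n : ℕ) x, ‖x‖ ≤ n + 1 → ψ n x = 1)
    (hu : Integrable u) :
    Tendsto (fun n => ∫ x, ψ n x ^ 2 * u x) atTop (𝓝 (∫ x, u x)) := by
  refine tendsto_integral_of_dominated_convergence (fun x => ‖u x‖) (fun n => ?_) hu.norm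
    (fun n => .of_forall fun x => ?_) (.of_forall fun x => tendsto_const_nhds.congr' ?_)
  · exact ((hψ n).contDiff.continuous.pow 2).aestronglyMeasurable.mul hu.aestronglyMeasurable
  · rw [norm_mul, Real.norm_of_nonneg (sq_nonneg (ψ n x))]
    exact mul_le_of_le_one_left (norm_nonneg _) ((hψ n).sq_le_one x)
  · obtain ⟨N, hN⟩ := exists_nat_ge ‖x‖
    filter_upwards [eventually_ge_atTop N] with n hn
    have hNn : (N : ℝ) ≤ n := mod_cast hn
    rw [hψ1 n x (by linarith), one_pow, one_mul]

theorem integrable_rpow_one_add (hq : 0 ≤ q) (hu : Continuous u) (hu0 : ∀ x, 0 ≤ u x)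
    (hui : Integrable u) (hub : BddAbove (range u)) : Integrable fun x => u x ^ (1 + q) := by
  obtain ⟨M, hM⟩ := hub
  refine (hui.mul_const (M ^ q)).mono'
    (hu.rpow_const fun x => Or.inr (by positivity)).aestronglyMeasurable (.of_forall fun x => ?_)
  have hx := hu0 x
  rw [Real.norm_of_nonneg (by positivity), Real.rpow_add_of_nonneg hx zero_le_one hq,
    Real.rpow_one]
  gcongr
  exact hM (mem_range_self x)

theorem tendsto_integral_mul_truncatedPower (hq : 0 < q) (hu : Continuous u)
    (hu0 : ∀ x, 0 ≤ u x) (hui : Integrable u) (hub : BddAbove (range u)) :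
    Tendsto (fun ε => ∫ x, u x * truncatedPower q ε (u x)) (𝓝[>] 0)
      (𝓝 (∫ x, u x ^ (1 + q))) := by
  obtain ⟨M, hM⟩ := hub
  refine tendsto_integral_filter_of_dominated_convergence (fun x => u x * (M + 1) ^ q) ?_ ?_
    (hui.mul_const _)
    (.of_forall fun x => (tendsto_mul_truncatedPower hq (hu0 x)).mono_left nhdsWithin_le_nhds)
  · filter_upwards [self_mem_nhdsWithin] with ε hε
    exact ((isEntropyWeight_truncatedPower hq hε).continuous_entropy_comp hu
      hu0).aestronglyMeasurable
  · filter_upwards [Ioc_mem_nhdsGT zero_lt_one] with ε hε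
    refine .of_forall fun x => ?_
    have hx := hu0 x
    have hpos := truncatedPower_pos q hε.1 hx
    rw [Real.norm_of_nonneg (by positivity)]
    gcongr
    exact (truncatedPower_le_add_one_rpow hq.le hε.1 hε.2 hx).trans
      (by gcongr; exact hM (mem_range_self x))

end Limits

/-- A classical solution on `[0, T]` of the linear equation `∂ₜw = σΔw − div(w b)` with a given
time-dependent drift `b`, all of whose time slices are bounded probability densities. -/
structure IsDriftDiffusionSolution {d : ℕ} (σ T : ℝ) (b : ℝ → ℝ^d → ℝ^d) (w : ℝ → ℝ^d → ℝ) :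
    Prop where
  contDiffOn : ContDiffOn ℝ 1 (fun p : ℝ × ℝ^d => w p.1 p.2) (Icc 0 T ×ˢ univ)
  contDiff : ∀ t ∈ Icc 0 T, ContDiff ℝ 2 (w t)
  nonneg : ∀ t ∈ Icc 0 T, ∀ x, 0 ≤ w t x
  integrable : ∀ t ∈ Icc 0 T, Integrable (w t)
  integral_eq_one : ∀ t ∈ Icc 0 T, ∫ x, w t x = 1
  bddAbove : ∀ t ∈ Icc 0 T, BddAbove (range (w t))
  hasDerivWithinAt : ∀ t ∈ Icc 0 T, ∀ x,
    HasDerivWithinAt (fun s => w s x) (driftDiffusion σ (b t) (w t) x) (Icc 0 T) t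

namespace IsDriftDiffusionSolution

variable {d : ℕ} {σ T q K e c M s t : ℝ} {b : ℝ → ℝ^d → ℝ^d} {w : ℝ → ℝ^d → ℝ}
  {θ θ' θ'' : ℝ → ℝ} {ψ : ℝ^d → ℝ}

theorem continuousOn_comp (hw : IsDriftDiffusionSolution σ T b w) {g : ℝ → ℝ}
    (hg : ContinuousOn g (Ici 0)) :
    ContinuousOn (fun p : ℝ × ℝ^d => g (w p.1 p.2)) (Icc 0 T ×ˢ univ) :=
  hg.comp hw.contDiffOn.continuousOn fun p hp => hw.nonneg p.1 hp.1 p.2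

theorem continuousOn_integral_entropy (hw : IsDriftDiffusionSolution σ T b w)
    (hθ : IsEntropyWeight q K θ θ' θ'') (hψ : IsCutoff e ψ) :
    ContinuousOn (fun t => ∫ x, ψ x ^ 2 * (w t x * θ (w t x))) (Icc 0 T) :=
  continuousOn_integral_mul (hψ.contDiff.continuous.pow 2) hψ.hasCompactSupport_sq <|
    hw.continuousOn_comp (g := fun y => y * θ y) fun _ hy =>
      (hθ.hasDerivAt_entropy hy).continuousAt.continuousWithinAt

theorem hasDerivAt_integral_entropy (hw : IsDriftDiffusionSolution σ T b w)
    (hθ : IsEntropyWeight q K θ θ' θ'') (hψ : IsCutoff e ψ) (ht : t ∈ Ioo 0 T) :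
    HasDerivAt (fun t => ∫ x, ψ x ^ 2 * (w t x * θ (w t x)))
      (∫ x, ψ x ^ 2 * ((θ (w t x) + w t x * θ' (w t x)) * driftDiffusion σ (b t) (w t) x)) t := by
  refine hasDerivAt_integral_mul (g := fun t x => w t x * θ (w t x))
    (g' := fun t x => (θ (w t x) + w t x * θ' (w t x)) * driftDiffusion σ (b t) (w t) x)
    (hψ.contDiff.continuous.pow 2) hψ.hasCompactSupport_sq ?_ ?_ (fun τ hτ x => ?_) ht
  · exact hw.continuousOn_comp (g := fun y => y * θ y) fun _ hy =>
      (hθ.hasDerivAt_entropy hy).continuousAt.continuousWithinAt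
  · refine (hw.continuousOn_comp (g := fun y => θ y + y * θ' y) fun _ hy =>
      (hθ.hasDerivAt_deriv_entropy hy).continuousAt.continuousWithinAt).mul ?_
    exact continuousOn_of_hasDerivWithinAt (R := fun t => driftDiffusion σ (b t) (w t))
      (ht.1.trans ht.2) hw.contDiffOn hw.hasDerivWithinAt
  · have hτI := Ioo_subset_Icc_self hτ
    exact (hθ.hasDerivAt_entropy (hw.nonneg τ hτI x)).comp τ
      ((hw.hasDerivWithinAt τ hτI x).hasDerivAt (Icc_mem_nhds hτ.1 hτ.2))

theorem integral_cutoff_entropy_le (hw : IsDriftDiffusionSolution σ T b w)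
    (hθ : IsEntropyWeight q K θ θ' θ'') (hψ : IsCutoff e ψ) (he : e ≤ 1) (hc : 0 ≤ c) (hM : 0 ≤ M)
    (hs : 0 ≤ s) (hst : s ≤ t) (ht : t ≤ T)
    (hrate : ∀ τ ∈ Ioo s t, HasEntropyGrowthRate σ q c M (b τ) (w τ)) :
    ∫ x, ψ x ^ 2 * (w t x * θ (w t x)) ≤ Real.exp (c * (t - s)) *
      ((∫ x, ψ x ^ 2 * (w s x * θ (w s x))) + K * M * e * (t - s)) :=
  le_exp_mul_of_deriv_le (f := fun t => ∫ x, ψ x ^ 2 * (w t x * θ (w t x))) hst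
    (mul_nonneg (mul_nonneg hθ.bound_nonneg hM) hψ.bound_nonneg) hc
    ((hw.continuousOn_integral_entropy hθ hψ).mono (Icc_subset_Icc hs ht))
    (fun _ hτ => hw.hasDerivAt_integral_entropy hθ hψ (Ioo_subset_Ioo hs ht hτ))
    fun τ hτ => hrate τ hτ hθ hψ he

theorem integral_entropy_le (hw : IsDriftDiffusionSolution σ T b w)
    (hθ : IsEntropyWeight q K θ θ' θ'') (hc : 0 ≤ c) (hM : 0 ≤ M)
    (hs : 0 ≤ s) (hst : s ≤ t) (ht : t ≤ T)
    (hrate : ∀ τ ∈ Ioo s t, HasEntropyGrowthRate σ q c M (b τ) (w τ)) :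
    ∫ x, w t x * θ (w t x) ≤ Real.exp (c * (t - s)) * ∫ x, w s x * θ (w s x) := by
  choose ψ hψ hψ1 using fun n : ℕ =>
    exists_isCutoff_eq_one d (Nat.one_div_pos_of_nat (α := ℝ) (n := n)) (Nat.cast_add_one_pos n)
  have hlim : ∀ τ ∈ Icc 0 T, Tendsto (fun n => ∫ x, ψ n x ^ 2 * (w τ x * θ (w τ x))) atTop
      (𝓝 (∫ x, w τ x * θ (w τ x))) := fun τ hτ =>
    tendsto_integral_sq_cutoff_mul hψ hψ1 (hθ.integrable_entropy_comp (hw.contDiff τ hτ).continuous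
      (hw.nonneg τ hτ) (hw.integrable τ hτ))
  have herror : Tendsto (fun n : ℕ => K * M * (1 / ((n : ℝ) + 1)) * (t - s)) atTop (𝓝 0) := by
    simpa using (tendsto_one_div_add_atTop_nhds_zero_nat.const_mul (K * M)).mul_const (t - s)
  have hbound := ((hlim s ⟨hs, hst.trans ht⟩).add herror).const_mul (Real.exp (c * (t - s)))
  rw [add_zero] at hbound
  refine le_of_tendsto_of_tendsto' (hlim t ⟨hs.trans hst, ht⟩) hbound fun n => ?_
  exact hw.integral_cutoff_entropy_le hθ (hψ n)
    (by simpa using Nat.one_div_le_one_div (α := ℝ) n.zero_le) hc hM hs hst ht hrate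

theorem integrable_rpow (hw : IsDriftDiffusionSolution σ T b w) (hq : 0 ≤ q) (ht : t ∈ Icc 0 T) :
    Integrable fun x => w t x ^ (1 + q) :=
  integrable_rpow_one_add hq (hw.contDiff t ht).continuous (hw.nonneg t ht) (hw.integrable t ht)
    (hw.bddAbove t ht)

theorem integral_rpow_le (hw : IsDriftDiffusionSolution σ T b w) (hq : 0 < q) (hc : 0 ≤ c)
    (hM : 0 ≤ M) (hs : 0 ≤ s) (hst : s ≤ t) (ht : t ≤ T)
    (hrate : ∀ τ ∈ Ioo s t, HasEntropyGrowthRate σ q c M (b τ) (w τ)) :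
    ∫ x, w t x ^ (1 + q) ≤ Real.exp (c * (t - s)) * ∫ x, w s x ^ (1 + q) := by
  have hlim : ∀ τ ∈ Icc 0 T, Tendsto (fun ε => ∫ x, w τ x * truncatedPower q ε (w τ x)) (𝓝[>] 0)
      (𝓝 (∫ x, w τ x ^ (1 + q))) := fun τ hτ =>
    tendsto_integral_mul_truncatedPower hq (hw.contDiff τ hτ).continuous (hw.nonneg τ hτ)
      (hw.integrable τ hτ) (hw.bddAbove τ hτ)
  refine le_of_tendsto_of_tendsto (hlim t ⟨hs.trans hst, ht⟩)
    ((hlim s ⟨hs, hst.trans ht⟩).const_mul _) ?_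
  filter_upwards [self_mem_nhdsWithin] with ε hε
  exact hw.integral_entropy_le (isEntropyWeight_truncatedPower hq hε) hc hM hs hst ht hrate

end IsDriftDiffusionSolution

/-- The form bound is only assumed at the times at which `∫ w ^ (1 + q)` has not doubled. The
growth rate `q L` ensures that it does not double before the form bound makes it decrease. -/
theorem IsDriftDiffusionSolution.integral_rpow_le_initial {d : ℕ} {σ T q B L c : ℝ}
    {b : ℝ → ℝ^d → ℝ^d} {w : ℝ → ℝ^d → ℝ} (hw : IsDriftDiffusionSolution σ T b w) (hσ : 0 ≤ σ)
    (hq : 0 < q) (hb : ∀ t ∈ Icc 0 T, ContDiff ℝ 1 (b t)) (hB : ∀ t ∈ Icc 0 T, ∀ x, ‖b t x‖ ≤ B)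
    (hL : ∀ t ∈ Icc 0 T, ∀ x, |diverg (b t) x| ≤ L) (hc : 0 ≤ c) (hcσ : c * ((2 + q) / 2) ≤ σ)
    (hform : ∀ t ∈ Icc 0 T, ∫ x, w t x ^ (1 + q) ≤ 2 * ∫ x, w 0 x ^ (1 + q) →
      IsFormBounded (ENNReal.ofReal c) (diverg (b t))) :
    ∀ t ∈ Icc 0 T, ∫ x, w t x ^ (1 + q) ≤ ∫ x, w 0 x ^ (1 + q) := by
  intro t₁ ht₁
  have hmem : (0 : ℝ) ∈ Icc 0 T := ⟨le_rfl, ht₁.1.trans ht₁.2⟩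
  have hB0 : 0 ≤ B := (norm_nonneg _).trans (hB 0 hmem 0)
  have hL0 : 0 ≤ L := (abs_nonneg _).trans (hL 0 hmem 0)
  refine le_initial_of_le_exp_mul (F := fun t => ∫ x, w t x ^ (1 + q)) (c := q * L) (by positivity)
    (integral_nonneg fun x => Real.rpow_nonneg (hw.nonneg 0 hmem x) _)
    (fun s t hs hst ht => ?_) (fun t ht hdouble => ?_) t₁ ht₁
  · refine hw.integral_rpow_le (M := σ + B) hq (by positivity) (by positivity) hs hst ht
      fun τ hτ => ?_
    have hτT : τ ∈ Icc 0 T := ⟨hs.trans hτ.1.le, hτ.2.le.trans ht⟩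
    exact hasEntropyGrowthRate_of_abs_diverg_le hσ (hw.contDiff τ hτT) (hw.nonneg τ hτT)
      (hw.integrable τ hτT) (hw.integral_eq_one τ hτT) (hb τ hτT) (hB τ hτT) (hL τ hτT)
  · have hdecay := hw.integral_rpow_le (c := 0) (M := σ + B + 2 * c * q) hq le_rfl (by positivity)
      le_rfl ht.1 ht.2 fun τ hτ => ?_
    · simpa using hdecay
    have hτT : τ ∈ Icc 0 T := ⟨hτ.1.le, hτ.2.le.trans ht.2⟩
    exact hasEntropyGrowthRate_zero_of_isFormBounded hq.le hσ (hw.contDiff τ hτT)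
      (hw.nonneg τ hτT) (hw.integrable τ hτT) (hw.integral_eq_one τ hτT) (hb τ hτT) (hB τ hτT) hc
      (hform τ hτT (hdouble τ (Ioo_subset_Icc_self hτ))) hcσ

section LpNorm

variable {α : Type*} {mα : MeasurableSpace α} {μ : Measure α} {u v : α → ℝ} {p c : ℝ}

theorem eLpNorm_eq_ofReal_integral_rpow (hp : 0 < p) (hum : AEStronglyMeasurable u μ)
    (hu0 : ∀ x, 0 ≤ u x) (hu : Integrable (fun x => u x ^ p) μ) :
    eLpNorm u (ENNReal.ofReal p) μ = ENNReal.ofReal ((∫ x, u x ^ p ∂μ) ^ p⁻¹) := by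
  have hnorm : ∀ x, ‖u x‖ ^ p = u x ^ p := fun x => by rw [Real.norm_of_nonneg (hu0 x)]
  have hp0 : ENNReal.ofReal p ≠ 0 := by simpa using hp
  have hmem : MemLp u (ENNReal.ofReal p) μ := by
    rw [← integrable_norm_rpow_iff hum hp0 ENNReal.ofReal_ne_top, ENNReal.toReal_ofReal hp.le]
    simpa only [hnorm] using hu
  rw [hmem.eLpNorm_eq_integral_rpow_norm hp0 ENNReal.ofReal_ne_top, ENNReal.toReal_ofReal hp.le]
  simp only [hnorm]

theorem eLpNorm_le_mul_of_integral_rpow_le (hp : 1 ≤ p) (hc : 1 ≤ c)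
    (hum : AEStronglyMeasurable u μ) (hu0 : ∀ x, 0 ≤ u x) (hu : Integrable (fun x => u x ^ p) μ)
    (hvm : AEStronglyMeasurable v μ) (hv0 : ∀ x, 0 ≤ v x) (hv : Integrable (fun x => v x ^ p) μ)
    (h : ∫ x, u x ^ p ∂μ ≤ c * ∫ x, v x ^ p ∂μ) :
    eLpNorm u (ENNReal.ofReal p) μ ≤ ENNReal.ofReal c * eLpNorm v (ENNReal.ofReal p) μ := by
  have hp0 : 0 < p := by linarith
  have hv_nonneg : 0 ≤ ∫ x, v x ^ p ∂μ := integral_nonneg fun x => Real.rpow_nonneg (hv0 x) p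
  rw [eLpNorm_eq_ofReal_integral_rpow hp0 hum hu0 hu,
    eLpNorm_eq_ofReal_integral_rpow hp0 hvm hv0 hv, ← ENNReal.ofReal_mul (by linarith)]
  refine ENNReal.ofReal_le_ofReal ?_
  calc (∫ x, u x ^ p ∂μ) ^ p⁻¹ ≤ (c * ∫ x, v x ^ p ∂μ) ^ p⁻¹ := by
        have hu_nonneg : 0 ≤ ∫ x, u x ^ p ∂μ := integral_nonneg fun x => Real.rpow_nonneg (hu0 x) p
        gcongr
    _ = c ^ p⁻¹ * (∫ x, v x ^ p ∂μ) ^ p⁻¹ := Real.mul_rpow (by linarith) hv_nonneg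
    _ ≤ c * (∫ x, v x ^ p ∂μ) ^ p⁻¹ := by
        gcongr
        exact Real.rpow_le_self_of_one_le hc (inv_le_one_of_one_le₀ hp)

theorem IsDriftDiffusionSolution.eLpNorm_le_mul {d : ℕ} {σ T q s t : ℝ} {b : ℝ → ℝ^d → ℝ^d}
    {w : ℝ → ℝ^d → ℝ} (hw : IsDriftDiffusionSolution σ T b w) (hq : 0 ≤ q) (hc : 1 ≤ c)
    (hs : s ∈ Icc 0 T) (ht : t ∈ Icc 0 T)
    (h : ∫ x, w t x ^ (1 + q) ≤ c * ∫ x, w s x ^ (1 + q)) :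
    eLpNorm (w t) (ENNReal.ofReal (1 + q)) volume ≤
      ENNReal.ofReal c * eLpNorm (w s) (ENNReal.ofReal (1 + q)) volume :=
  eLpNorm_le_mul_of_integral_rpow_le (by linarith) hc (hw.integrable t ht).aestronglyMeasurable
    (hw.nonneg t ht) (hw.integrable_rpow hq ht) (hw.integrable s hs).aestronglyMeasurable
    (hw.nonneg s hs) (hw.integrable_rpow hq hs) h

end LpNorm

section Aggregation

variable {d : ℕ} {lam σ κ T : ℝ} {ρ : ℝ^d → ℝ} {w : ℝ → ℝ^d → ℝ}

theorem IsAggregationSolution.isDriftDiffusionSolution (h0 : 0 < lam) (hd : lam < d)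
    (hρ : ContDiff ℝ 2 ρ) (hρs : HasCompactSupport ρ)
    (hw : IsAggregationSolution σ κ T (gradient (riesz lam ρ)) w) :
    IsDriftDiffusionSolution σ T (fun t => κ • interactionDrift lam ρ (w t)) w := by
  obtain ⟨hsmooth, hschwartz, hnonneg, hmass, heq⟩ := hw
  have hcontDiff : ∀ t ∈ Icc 0 T, ContDiff ℝ 2 (w t) := fun t ht => by
    obtain ⟨S, hS⟩ := hschwartz t ht
    exact funext hS ▸ S.smooth 2
  have hintegrable : ∀ t ∈ Icc 0 T, Integrable (w t) := fun t ht => by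
    obtain ⟨S, hS⟩ := hschwartz t ht
    exact funext hS ▸ S.integrable
  refine ⟨hsmooth.of_le (by norm_num), hcontDiff, hnonneg, hintegrable, hmass, fun t ht => ?_,
    fun t ht x => (heq t ht x).congr_deriv ?_⟩
  · obtain ⟨S, hS⟩ := hschwartz t ht
    obtain ⟨M, -, hM⟩ := S.decay 0 0
    refine ⟨M, ?_⟩
    rintro _ ⟨x, rfl⟩
    rw [hS]
    exact (le_abs_self _).trans (by simpa using hM x)
  · have hflux : DifferentiableAt ℝ (w t • interactionDrift lam ρ (w t)) x :=
      ((hcontDiff t ht).differentiable two_ne_zero x).smul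
        ((contDiff_interactionDrift h0 hd hρ hρs (hintegrable t ht)).differentiable one_ne_zero x)
    rw [driftDiffusion, smul_comm, diverg_const_smul κ hflux]
    rfl

theorem integral_rpow_le_initial_of_isAggregationSolution {q c : ℝ} (h0 : 0 < lam) (hd : lam < d)
    (hρ : ContDiff ℝ 2 ρ) (hρs : HasCompactSupport ρ) (hσ : 0 ≤ σ) (hq : 0 < q) (hc : 0 ≤ c)
    (hcσ : c * ((2 + q) / 2) ≤ σ) (hw : IsAggregationSolution σ κ T (gradient (riesz lam ρ)) w)
    (hform : ∀ t ∈ Icc 0 T, ∫ x, w t x ^ (1 + q) ≤ 2 * ∫ x, w 0 x ^ (1 + q) →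
      IsFormBounded (ENNReal.ofReal c) fun x => κ * diverg (interactionDrift lam ρ (w t)) x) :
    ∀ t ∈ Icc 0 T, ∫ x, w t x ^ (1 + q) ≤ ∫ x, w 0 x ^ (1 + q) := by
  have hsol := hw.isDriftDiffusionSolution h0 hd hρ hρs
  obtain ⟨B, L, hBL⟩ := exists_interactionDrift_bounds h0 hd hρ hρs
  have hdrift : ∀ t ∈ Icc 0 T, ContDiff ℝ 1 (interactionDrift lam ρ (w t)) := fun t ht =>
    contDiff_interactionDrift h0 hd hρ hρs (hsol.integrable t ht)
  have hbounds := fun t ht =>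
    hBL (w t) (hsol.integrable t ht) (hsol.nonneg t ht) (hsol.integral_eq_one t ht)
  have hdiverg : ∀ t ∈ Icc 0 T, diverg (κ • interactionDrift lam ρ (w t)) =
      fun x => κ * diverg (interactionDrift lam ρ (w t)) x := fun t ht =>
    funext fun x => diverg_const_smul κ ((hdrift t ht).differentiable one_ne_zero x)
  refine hsol.integral_rpow_le_initial (B := |κ| * B) (L := |κ| * L) hσ hq
    (fun t ht => contDiff_const.smul (hdrift t ht)) (fun t ht x => ?_) (fun t ht x => ?_) hc hcσ
    fun t ht hdouble => hdiverg t ht ▸ hform t ht hdouble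
  · rw [Pi.smul_apply, norm_smul, Real.norm_eq_abs]
    gcongr
    exact (hbounds t ht x).1
  · rw [hdiverg t ht, abs_mul]
    gcongr
    exact (hbounds t ht x).2

theorem exists_density_riesz_eq_Veta {η : ℝ} (lam : ℝ) (hη : 0 < η) {χ : ℝ^d → ℝ}
    (hχ : ContDiff ℝ 2 χ) (hχs : HasCompactSupport χ) (hχ0 : ∀ x, 0 ≤ χ x)
    (hχ1 : ∫ x, χ x = 1) :
    ∃ ρ : ℝ^d → ℝ, ContDiff ℝ 2 ρ ∧ HasCompactSupport ρ ∧ (∀ x, 0 ≤ ρ x) ∧ ∫ x, ρ x = 1 ∧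
      riesz lam ρ = Veta lam χ η := by
  refine ⟨fun x => η ^ (-(d : ℝ)) * χ (η⁻¹ • x),
    contDiff_const.mul (hχ.comp (contDiff_const_smul _)),
    (hχs.comp_smul (inv_ne_zero hη.ne')).mul_left, fun x => mul_nonneg (by positivity) (hχ0 _),
    ?_, funext fun z => ?_⟩
  · rw [integral_const_mul, Measure.integral_comp_inv_smul, hχ1, finrank_euclideanSpace,
      Fintype.card_fin, smul_eq_mul, mul_one, abs_of_pos (by positivity), Real.rpow_neg hη.le,
      Real.rpow_natCast, inv_mul_cancel₀ (by positivity)]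
  · simp only [riesz_apply, Veta, smul_eq_mul, mul_comm]

theorem intermediate_equation_Lpstar_decay_general (h0 : 0 < lam) (hd : lam + 2 < d)
    (hσ : 0 < σ) :
    ∃ Cstar : ℝ, 0 < Cstar ∧ ∀ κ T η : ℝ, 0 < η → ∀ χ : ℝ^d → ℝ, ContDiff ℝ 2 χ →
      HasCompactSupport χ → (∀ x, 0 ≤ χ x) → ∫ x, χ x = 1 → ∀ w : ℝ → ℝ^d → ℝ,
        IsAggregationSolution σ κ T (gradient (Veta lam χ η)) w →
        ‖κ‖ₑ * eLpNorm (w 0) (ENNReal.ofReal (d / (d - lam))) volume ≤ ENNReal.ofReal Cstar →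
      ∀ t ∈ Icc 0 T, eLpNorm (w t) (ENNReal.ofReal (d / (d - lam))) volume ≤
        eLpNorm (w 0) (ENNReal.ofReal (d / (d - lam))) volume := by
  have hld : lam < d := by linarith
  have hdl : 0 < d - lam := by linarith
  obtain ⟨C, hC⟩ := exists_isFormBounded_diverg_interactionDrift h0 hd
  obtain ⟨q, hq, hpq⟩ : ∃ q, 0 < q ∧ d / (d - lam) = 1 + q :=
    ⟨lam / (d - lam), by positivity, by field_simp; ring⟩
  rw [hpq] at hC ⊢
  obtain ⟨Cstar, hCstar, hCstar_lt⟩ := exists_pos_mul_lt hσ (C * (2 + q))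
  refine ⟨Cstar, hCstar, fun κ T η hη χ hχ hχs hχ0 hχ1 w hw hsmall t₁ ht₁ => ?_⟩
  obtain ⟨ρ, hρ, hρs, hρ0, hρ1, hriesz⟩ := exists_density_riesz_eq_Veta lam hη hχ hχs hχ0 hχ1
  rw [← hriesz] at hw
  have hsol := hw.isDriftDiffusionSolution h0 hld hρ hρs
  have hmem : (0 : ℝ) ∈ Icc 0 T := ⟨le_rfl, ht₁.1.trans ht₁.2⟩
  have hdecay := integral_rpow_le_initial_of_isAggregationSolution h0 hld hρ hρs hσ.le hq
    (by positivity : 0 ≤ 2 * C * Cstar) (by linarith) hw (fun t ht hdouble => ?_) t₁ ht₁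
  · simpa using hsol.eLpNorm_le_mul hq.le le_rfl hmem ht₁ (by simpa using hdecay)
  refine ((hC ρ (w t) hρ hρs hρ0 hρ1 (hsol.contDiff t ht).continuous.measurable
    (hsol.integrable t ht)).const_mul κ).mono ?_
  calc ‖κ‖ₑ * (C * eLpNorm (w t) (ENNReal.ofReal (1 + q)) volume)
      ≤ ‖κ‖ₑ * (C * (ENNReal.ofReal 2 * eLpNorm (w 0) (ENNReal.ofReal (1 + q)) volume)) := by
        gcongr
        exact hsol.eLpNorm_le_mul hq.le one_le_two hmem ht hdouble
    _ = ENNReal.ofReal 2 * C * (‖κ‖ₑ * eLpNorm (w 0) (ENNReal.ofReal (1 + q)) volume) := by ring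
    _ ≤ ENNReal.ofReal 2 * C * ENNReal.ofReal Cstar := by gcongr
    _ = ENNReal.ofReal (2 * C * Cstar) := by
        rw [ENNReal.ofReal_mul (by positivity), ENNReal.ofReal_mul two_pos.le,
          ENNReal.ofReal_coe_nnreal]

end Aggregation

/-- For `d ≥ 3`, `0 < λ < d-2`, `σ > 0` there is `C* > 0` depending only on `d`, `λ`, `σ`
(independent of `η`, `T`, `κ`, `χ`) such that every classical Schwartz-class solution of
the intermediate equation `∂_t w = σΔw − κ div(w ∇V^η * w)` with
`‖w(0)‖_{L^{p*}} ≤ C*`, `p* = d/(d−λ)`, satisfies `‖w(t)‖_{L^{p*}} ≤ ‖w(0)‖_{L^{p*}}`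
for all `t ∈ [0,T]`. -/
theorem intermediate_equation_Lpstar_decay
    (d : ℕ) (hd : 3 ≤ d) (lam : ℝ) (hlam0 : 0 < lam) (hlamd : lam < (d : ℝ) - 2)
    (σ : ℝ) (hσ : 0 < σ) :
    ∃ Cstar : ℝ, 0 < Cstar ∧
      ∀ (κ : ℝ), (κ = 1 ∨ κ = -1) →
      ∀ (T : ℝ), 0 < T →
      ∀ (η : ℝ), 0 < η →
      ∀ (χ : EuclideanSpace ℝ (Fin d) → ℝ),
        ContDiff ℝ (⊤ : ℕ∞) χ → HasCompactSupport χ → (∀ x, 0 ≤ χ x) → (∫ x, χ x) = 1 →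
      ∀ (w : ℝ → EuclideanSpace ℝ (Fin d) → ℝ),
        IsAggregationSolution σ κ T (gradient (Veta lam χ η)) w →
        eLpNorm (w 0) (ENNReal.ofReal ((d : ℝ) / ((d : ℝ) - lam))) volume
          ≤ ENNReal.ofReal Cstar →
      ∀ t ∈ Icc (0:ℝ) T,
        eLpNorm (w t) (ENNReal.ofReal ((d : ℝ) / ((d : ℝ) - lam))) volume
          ≤ eLpNorm (w 0) (ENNReal.ofReal ((d : ℝ) / ((d : ℝ) - lam))) volume := by
  obtain ⟨Cstar, hCstar, hdecay⟩ :=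
    intermediate_equation_Lpstar_decay_general (d := d) hlam0 (by linarith) hσ
  exact ⟨Cstar, hCstar, fun κ hκ T _ η hη χ hχ hχs hχ0 hχ1 w hw hsmall =>
    hdecay κ T η hη χ (mod_cast contDiff_infty.1 hχ 2) hχs hχ0 hχ1 w hw <| by
      rcases hκ with rfl | rfl <;> simpa using hsmall⟩
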